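/- arXiv:1810.05255 — 3 statements merged into one kernel-verified Lean document; each statement's English description precedes it below -/
import Mathlib

section
/- Let f: X → Y be a finite surjective morphism of integral schemes with Y normal, let L be a line bundle on Y, and suppose there exists a nonzero global section h ∈ H⁰(X, f*L). Then there exists an integer n ≥ 1 such that H⁰(Y, L^⊗n) ≠ 0. -/
open AlgebraicGeometry CategoryTheory Opposite

universe u

/-- A line bundle on a scheme `Y`, presented by Čech data: an open cover `(U i)` together
with invertible transition functions `g i j ∈ Γ(Y, U i ⊓ U j)` satisfying the cocycle
condition. -/
structure LineBundleData (Y : Scheme.{u}) where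
  ι : Type u
  U : ι → Y.Opens
  covers : ∀ y : Y, ∃ i, y ∈ U i
  g : ∀ i j : ι, Y.presheaf.obj (op (U i ⊓ U j))
  g_unit : ∀ i j, IsUnit (g i j)
  g_self : ∀ i, g i i = 1
  cocycle : ∀ i j l : ι,
    Y.presheaf.map (homOfLE (inf_le_left : (U i ⊓ U j) ⊓ U l ≤ U i ⊓ U j)).op (g i j) *
      Y.presheaf.map (homOfLE (le_inf ((inf_le_left).trans inf_le_right)
        (inf_le_right) : (U i ⊓ U j) ⊓ U l ≤ U j ⊓ U l)).op (g j l) =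
    Y.presheaf.map (homOfLE (le_inf ((inf_le_left).trans inf_le_left)
        (inf_le_right) : (U i ⊓ U j) ⊓ U l ≤ U i ⊓ U l)).op (g i l)

/-- A global section of the `n`-th tensor power `L^⊗n`: a family of local sections glued via
the `n`-th powers of the transition functions. -/
def LineBundleData.IsSection {Y : Scheme.{u}} (L : LineBundleData Y) (n : ℕ)
    (s : ∀ i, Y.presheaf.obj (op (L.U i))) : Prop :=
  ∀ i j, Y.presheaf.map (homOfLE (inf_le_left : L.U i ⊓ L.U j ≤ L.U i)).op (s i)
    = (L.g i j) ^ n *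
      Y.presheaf.map (homOfLE (inf_le_right : L.U i ⊓ L.U j ≤ L.U j)).op (s j)

/-- A global section of the pullback line bundle `f*L` on `X`: a family of local sections
over the opens `f⁻¹(U i)`, glued via the pulled-back transition functions. -/
def LineBundleData.IsPullbackSection {X Y : Scheme.{u}} (f : X ⟶ Y) (L : LineBundleData Y)
    (t : ∀ i, X.presheaf.obj (op (f ⁻¹ᵁ L.U i))) : Prop :=
  ∀ i j,
    X.presheaf.map ((TopologicalSpace.Opens.map f.base).map
        (homOfLE (inf_le_left : L.U i ⊓ L.U j ≤ L.U i))).op (t i)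
      = f.app (L.U i ⊓ L.U j) (L.g i j) *
        X.presheaf.map ((TopologicalSpace.Opens.map f.base).map
          (homOfLE (inf_le_right : L.U i ⊓ L.U j ≤ L.U j))).op (t j)

/-!
At the generic points, a section of `f*L` is a family `tᵢ ∈ k(X)` with `tᵢ = gᵢⱼ tⱼ` and
`gᵢⱼ ∈ k(Y)ˣ`. The constant coefficient of the minimal polynomial over `k(Y)` plays the role of the
norm: all the `tᵢ` have the same degree `n` over `k(Y)`, and passing from `tⱼ` to `gᵢⱼ tⱼ`
multiplies this coefficient by `gᵢⱼ ^ n`. Since `tᵢ` is integral over the integrally closed local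
ring of `Y` at every point of `Uᵢ`, the coefficient lies in all of these local rings, hence in
`Γ(Y, Uᵢ)`.
-/

lemma coeff_minpoly_mem_range_algebraMap {O K M : Type*} [CommRing O] [IsDomain O]
    [IsIntegrallyClosed O] [Field K] [CommRing M] [IsDomain M] [Algebra O K] [IsFractionRing O K]
    [Algebra K M] [Algebra O M] [IsScalarTower O K M] {x : M} (hx : IsIntegral O x) (k : ℕ) :
    (minpoly K x).coeff k ∈ (algebraMap O K).range := by
  rw [minpoly.isIntegrallyClosed_eq_field_fractions' K hx, Polynomial.coeff_map]
  exact ⟨_, rfl⟩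

lemma map_genericPoint_of_denseRange {α β : Type*} [TopologicalSpace α] [QuasiSober α]
    [IrreducibleSpace α] [TopologicalSpace β] [QuasiSober β] [IrreducibleSpace β] [T0Space β]
    {f : α → β} (hf : Continuous f) (hd : DenseRange f) :
    f (genericPoint α) = genericPoint β := by
  have hη : IsGenericPoint (f (genericPoint α)) (closure (f '' Set.univ)) :=
    (genericPoint_spec α).image hf
  rw [Set.image_univ, hd.closure_range] at hη
  exact hη.eq (genericPoint_spec β)

section Sections

variable {X Y : Scheme.{u}}

instance nonempty_inf_opens [IrreducibleSpace X] (U V : X.Opens) [hU : Nonempty U]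
    [hV : Nonempty V] : Nonempty (U ⊓ V).toScheme :=
  (nonempty_preirreducible_inter U.isOpen V.isOpen (Set.nonempty_coe_sort.mp hU)
    (Set.nonempty_coe_sort.mp hV)).to_subtype

instance nonempty_preimage_opens (f : X ⟶ Y) [IsDominant f] (U : Y.Opens) [hU : Nonempty U] :
    Nonempty (f ⁻¹ᵁ U).toScheme :=
  let ⟨x, hx⟩ := f.denseRange.exists_mem_open U.isOpen (Set.nonempty_coe_sort.mp hU)
  ⟨x, hx⟩

lemma subsingleton_section_of_isEmpty (U : X.Opens) [hU : IsEmpty U] : Subsingleton Γ(X, U) := by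
  obtain rfl : U = ⊥ := by
    simpa only [SetLike.ext'_iff, TopologicalSpace.Opens.coe_bot] using Set.isEmpty_coe_sort.mp hU
  infer_instance

lemma germToFunctionField_res [IrreducibleSpace X] {U V : X.Opens} [Nonempty U] [Nonempty V]
    (h : V ≤ U) (s : Γ(X, U)) :
    X.germToFunctionField V (X.presheaf.map (homOfLE h).op s) = X.germToFunctionField U s :=
  X.presheaf.germ_res_apply _ _ _ s

lemma section_ext_of_germToFunctionField [IsIntegral X] {U : X.Opens} {s t : Γ(X, U)}
    (h : ∀ [Nonempty U], X.germToFunctionField U s = X.germToFunctionField U t) : s = t := by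
  rcases isEmpty_or_nonempty U with hU | hU
  · exact (subsingleton_section_of_isEmpty U).elim s t
  · exact X.germToFunctionField_injective U h

lemma exists_germToFunctionField_eq [IsIntegral X] (U : X.Opens) [Nonempty U]
    {a : X.functionField}
    (ha : ∀ x ∈ U, a ∈ (algebraMap (X.presheaf.stalk x) X.functionField).range) :
    ∃ s : Γ(X, U), X.germToFunctionField U s = a := by
  have hlocal (x : U) : ∃ V ≤ U, x.1 ∈ V ∧ ∃ s : Γ(X, V),
      ∀ [Nonempty V], X.germToFunctionField V s = a := by
    obtain ⟨b, rfl⟩ := ha x x.2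
    obtain ⟨V, hVU, hxV, s, rfl⟩ := X.presheaf.exists_le_germ_eq b x.2
    exact ⟨V, hVU, hxV, s, fun {_} ↦
      (Scheme.algebraMap_germ_eq_germToFunctionField X hxV s).symm⟩
  choose V hVU hV s hs using hlocal
  have hVne (x : U) : Nonempty (V x) := ⟨x.1, hV x⟩
  have hcompat : TopCat.Presheaf.IsCompatible X.presheaf V s := fun x y ↦
    X.germToFunctionField_injective (V x ⊓ V y) <| calc
      _ = X.germToFunctionField (V x) (s x) := germToFunctionField_res inf_le_left (s x)
      _ = X.germToFunctionField (V y) (s y) := (hs x).trans (hs y).symm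
      _ = _ := (germToFunctionField_res inf_le_right (s y)).symm
  obtain ⟨σ, hσ, -⟩ := X.sheaf.existsUnique_gluing' V U (fun x ↦ homOfLE (hVU x))
    (fun x hx ↦ TopologicalSpace.Opens.mem_iSup.mpr ⟨⟨x, hx⟩, hV _⟩) s hcompat
  obtain ⟨x, hx⟩ := ‹Nonempty U›
  refine ⟨σ, ?_⟩
  rw [← hs ⟨x, hx⟩, ← hσ ⟨x, hx⟩]
  exact (germToFunctionField_res (hVU ⟨x, hx⟩) σ).symm

end Sections

section FunctionFieldMap

variable {X Y : Scheme.{u}} [IrreducibleSpace X] [IrreducibleSpace Y] (f : X ⟶ Y) [IsDominant f]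

/-- The map of function fields `k(Y) ⟶ k(X)` induced by a dominant morphism `X ⟶ Y`. -/
noncomputable def functionFieldMap : Y.functionField ⟶ X.functionField :=
  Y.presheaf.stalkSpecializes
    (specializes_of_eq (map_genericPoint_of_denseRange f.continuous f.denseRange)) ≫
    f.stalkMap (genericPoint X)

lemma functionFieldMap_germToFunctionField (U : Y.Opens) [Nonempty U] (s : Γ(Y, U)) :
    functionFieldMap f (Y.germToFunctionField U s) =
      X.germToFunctionField (f ⁻¹ᵁ U) (f.app U s) := by
  have hcomp : Y.germToFunctionField U ≫ functionFieldMap f =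
      f.app U ≫ X.germToFunctionField (f ⁻¹ᵁ U) := by
    rw [functionFieldMap, TopCat.Presheaf.germ_stalkSpecializes_assoc, f.germ_stalkMap]
  exact congr($hcomp s)

lemma isIntegralElem_stalk_germToFunctionField [IsIntegralHom f] {U : Y.Opens} [Nonempty U] {y : Y}
    (hy : y ∈ U) (t : Γ(X, f ⁻¹ᵁ U)) :
    ((functionFieldMap f).hom.comp
      (algebraMap (Y.presheaf.stalk y) Y.functionField)).IsIntegralElem
        (X.germToFunctionField (f ⁻¹ᵁ U) t) := by
  obtain ⟨_, ⟨V, hV, rfl⟩, hyV, hVU⟩ :=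
    Y.isBasis_affineOpens.exists_subset_of_mem_open hy U.isOpen
  have : Nonempty V := ⟨y, hyV⟩
  have hcomp : ((functionFieldMap f).hom.comp
      (algebraMap (Y.presheaf.stalk y) Y.functionField)).comp (Y.presheaf.germ V y hyV).hom =
      (X.germToFunctionField (f ⁻¹ᵁ V)).hom.comp (f.app V).hom := by
    ext s
    exact congr(functionFieldMap f
      $(Scheme.algebraMap_germ_eq_germToFunctionField Y hyV s)).trans
        (functionFieldMap_germToFunctionField f V s)
  rw [← germToFunctionField_res (f.preimage_mono hVU) t]
  obtain ⟨p, hp, hpt⟩ := (f.isIntegral_app V hV _).map (X.germToFunctionField (f ⁻¹ᵁ V)).hom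
  refine ⟨p.map (Y.presheaf.germ V y hyV).hom, hp.map _, ?_⟩
  rw [Polynomial.eval₂_map, hcomp]
  exact hpt

lemma isIntegralElem_germToFunctionField [IsIntegralHom f] (U : Y.Opens) [Nonempty U]
    (t : Γ(X, f ⁻¹ᵁ U)) :
    (functionFieldMap f).hom.IsIntegralElem (X.germToFunctionField (f ⁻¹ᵁ U) t) := by
  obtain ⟨y, hy⟩ := ‹Nonempty U›
  obtain ⟨p, hp, hpt⟩ := isIntegralElem_stalk_germToFunctionField f hy t
  exact ⟨p.map _, hp.map _, by rwa [Polynomial.eval₂_map]⟩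

end FunctionFieldMap

section FunctionFieldMinpoly

variable {X Y : Scheme.{u}} [IsIntegral X] [IsIntegral Y] (f : X ⟶ Y) [IsDominant f]

/-- The minimal polynomial of `x ∈ k(X)` over `k(Y)`, for a dominant morphism `f : X ⟶ Y`. As a
definition it keeps the `k(Y)`-algebra structure on `k(X)`, which depends on `f`, out of the
statements. -/
noncomputable def functionFieldMinpoly (x : X.functionField) : Polynomial Y.functionField :=
  letI := (functionFieldMap f).hom.toAlgebra
  minpoly Y.functionField x

variable {f}

lemma functionFieldMinpoly_natDegree_pos {x : X.functionField}
    (hx : (functionFieldMap f).hom.IsIntegralElem x) : 0 < (functionFieldMinpoly f x).natDegree :=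
  letI := (functionFieldMap f).hom.toAlgebra
  minpoly.natDegree_pos hx

lemma functionFieldMinpoly_coeff_zero_ne_zero {x : X.functionField}
    (hx : (functionFieldMap f).hom.IsIntegralElem x) (h0 : x ≠ 0) :
    (functionFieldMinpoly f x).coeff 0 ≠ 0 :=
  letI := (functionFieldMap f).hom.toAlgebra
  minpoly.coeff_zero_ne_zero hx h0

lemma functionFieldMinpoly_map_mul {x : X.functionField}
    (hx : (functionFieldMap f).hom.IsIntegralElem x) {c : Y.functionField} (hc : c ≠ 0) :
    functionFieldMinpoly f (functionFieldMap f c * x) = (functionFieldMinpoly f x).scaleRoots c :=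
  letI := (functionFieldMap f).hom.toAlgebra
  IsIntegrallyClosed.minpoly_smul hc hx

variable (f) in
lemma exists_germToFunctionField_eq_coeff [IsIntegralHom f]
    (hY : ∀ y : Y, IsIntegrallyClosed (Y.presheaf.stalk y))
    (U : Y.Opens) (t : Γ(X, f ⁻¹ᵁ U)) (k : ℕ) :
    ∃ s : Γ(Y, U), ∀ [Nonempty U], Y.germToFunctionField U s =
      (functionFieldMinpoly f (X.germToFunctionField (f ⁻¹ᵁ U) t)).coeff k := by
  rcases isEmpty_or_nonempty U with hU | hU
  · exact ⟨0, fun {h} ↦ (not_isEmpty_iff.mpr h hU).elim⟩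
  · obtain ⟨s, hs⟩ : ∃ s, Y.germToFunctionField U s = _ :=
      exists_germToFunctionField_eq U fun y hy ↦ by
        have := hY y
        algebraize [(functionFieldMap f).hom, (functionFieldMap f).hom.comp
          (algebraMap (Y.presheaf.stalk y) Y.functionField)]
        exact coeff_minpoly_mem_range_algebraMap
          (isIntegralElem_stalk_germToFunctionField f hy t) k
    exact ⟨s, hs⟩

end FunctionFieldMinpoly

namespace LineBundleData

variable {X Y : Scheme.{u}} {L : LineBundleData Y}

lemma isSection_of_germToFunctionField [IsIntegral Y] {n : ℕ} {s : ∀ i, Γ(Y, L.U i)}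
    (h : ∀ i j [Nonempty (L.U i)] [Nonempty (L.U j)],
      Y.germToFunctionField (L.U i) (s i) =
        Y.germToFunctionField (L.U i ⊓ L.U j) (L.g i j) ^ n *
          Y.germToFunctionField (L.U j) (s j)) :
    L.IsSection n s := fun i j ↦
  section_ext_of_germToFunctionField fun {hij} ↦ by
    have : Nonempty (L.U i) := hij.map fun y ↦ ⟨y.1, y.2.1⟩
    have : Nonempty (L.U j) := hij.map fun y ↦ ⟨y.1, y.2.2⟩
    rw [map_mul, map_pow, germToFunctionField_res, germToFunctionField_res]
    exact h i j

namespace IsPullbackSection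

variable {f : X ⟶ Y} [IsDominant f] {t : ∀ i, Γ(X, f ⁻¹ᵁ L.U i)}

lemma germToFunctionField_eq [IrreducibleSpace X] [IrreducibleSpace Y]
    (ht : L.IsPullbackSection f t) (i j : L.ι) [Nonempty (L.U i)] [Nonempty (L.U j)] :
    X.germToFunctionField (f ⁻¹ᵁ L.U i) (t i) =
      functionFieldMap f (Y.germToFunctionField (L.U i ⊓ L.U j) (L.g i j)) *
        X.germToFunctionField (f ⁻¹ᵁ L.U j) (t j) := by
  rw [functionFieldMap_germToFunctionField,
    ← germToFunctionField_res (f.preimage_mono (inf_le_left : L.U i ⊓ L.U j ≤ L.U i)),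
    ← germToFunctionField_res (f.preimage_mono (inf_le_right : L.U i ⊓ L.U j ≤ L.U j)),
    ← map_mul]
  exact congr(X.germToFunctionField _ $(ht i j))

variable [IsIntegral X] [IsIntegral Y] [IsIntegralHom f]

lemma functionFieldMinpoly_eq_scaleRoots (ht : L.IsPullbackSection f t) (i j : L.ι)
    [Nonempty (L.U i)] [Nonempty (L.U j)] :
    functionFieldMinpoly f (X.germToFunctionField (f ⁻¹ᵁ L.U i) (t i)) =
      (functionFieldMinpoly f (X.germToFunctionField (f ⁻¹ᵁ L.U j) (t j))).scaleRoots
        (Y.germToFunctionField (L.U i ⊓ L.U j) (L.g i j)) := by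
  rw [ht.germToFunctionField_eq i j]
  exact functionFieldMinpoly_map_mul (isIntegralElem_germToFunctionField f (L.U j) (t j))
    ((L.g_unit i j).map (Y.germToFunctionField (L.U i ⊓ L.U j)).hom).ne_zero

lemma isSection_of_germToFunctionField_eq_coeff_zero (ht : L.IsPullbackSection f t) (i₀ : L.ι)
    [Nonempty (L.U i₀)] {s : ∀ i, Γ(Y, L.U i)}
    (hs : ∀ i [Nonempty (L.U i)], Y.germToFunctionField (L.U i) (s i) =
      (functionFieldMinpoly f (X.germToFunctionField (f ⁻¹ᵁ L.U i) (t i))).coeff 0) :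
    L.IsSection
      (functionFieldMinpoly f (X.germToFunctionField (f ⁻¹ᵁ L.U i₀) (t i₀))).natDegree s :=
  isSection_of_germToFunctionField fun i j {_ _} ↦ by
    rw [hs i, hs j, ht.functionFieldMinpoly_eq_scaleRoots i j,
      ht.functionFieldMinpoly_eq_scaleRoots i₀ j, Polynomial.natDegree_scaleRoots,
      Polynomial.coeff_scaleRoots, Nat.sub_zero, mul_comm]

end IsPullbackSection

end LineBundleData

theorem stmt_0_general {X Y : Scheme.{u}} (f : X ⟶ Y)
    [IsIntegral X] [IsIntegral Y] [IsIntegralHom f] [IsDominant f]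
    (hnormal : ∀ y : Y, IsIntegrallyClosed (Y.presheaf.stalk y))
    (L : LineBundleData Y) (t : ∀ i, Γ(X, f ⁻¹ᵁ L.U i))
    (ht : L.IsPullbackSection f t) (htnz : ∃ i, t i ≠ 0) :
    ∃ n : ℕ, 1 ≤ n ∧ ∃ s : ∀ i, Γ(Y, L.U i), L.IsSection n s ∧ ∃ i, s i ≠ 0 := by
  choose s hs using fun i ↦ exists_germToFunctionField_eq_coeff f hnormal (L.U i) (t i) 0
  obtain ⟨i, hti⟩ := htnz
  have hX : Nonempty (f ⁻¹ᵁ L.U i).toScheme := not_isEmpty_iff.mp fun _ ↦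
    hti ((subsingleton_section_of_isEmpty (f ⁻¹ᵁ L.U i)).elim _ _)
  have hY : Nonempty (L.U i) := hX.map fun x ↦ ⟨f x.1, x.2⟩
  have hτ : X.germToFunctionField (f ⁻¹ᵁ L.U i) (t i) ≠ 0 :=
    (map_ne_zero_iff _ (X.germToFunctionField_injective _)).mpr hti
  have hint := isIntegralElem_germToFunctionField f (L.U i) (t i)
  refine ⟨_, functionFieldMinpoly_natDegree_pos hint, s,
    ht.isSection_of_germToFunctionField_eq_coeff_zero i hs, i, fun hsi ↦ ?_⟩
  apply functionFieldMinpoly_coeff_zero_ne_zero hint hτ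
  rw [← hs i, hsi, map_zero]

/-- Let `f : X ⟶ Y` be a finite surjective morphism of integral schemes with
`Y` normal (all local rings of `Y` are integrally closed), and let `L` be a line bundle on
`Y`.  If `f*L` has a nonzero global section on `X`, then there is `n ≥ 1` such that
`H⁰(Y, L^⊗n) ≠ 0`. -/
theorem stmt_0 {X Y : Scheme.{u}} (f : X ⟶ Y)
    [IsIntegral X] [IsIntegral Y] [IsFinite f] [Surjective f]
    (hnormal : ∀ y : Y, IsIntegrallyClosed (Y.presheaf.stalk y))
    (L : LineBundleData Y)
    (t : ∀ i, X.presheaf.obj (op (f ⁻¹ᵁ L.U i)))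
    (ht : L.IsPullbackSection f t) (htnz : ∃ i, t i ≠ 0) :
    ∃ n : ℕ, 1 ≤ n ∧ ∃ s : ∀ i, Y.presheaf.obj (op (L.U i)),
      L.IsSection n s ∧ ∃ i, s i ≠ 0 :=
  stmt_0_general f hnormal L t ht htnz
end

section
/- Let G be an algebraic group over an algebraically closed field k acting on an irreducible k-variety X, and let Y ⊆ X be an irreducible closed subvariety. Suppose there is a nonempty open subset U ⊆ Y such that for all y ∈ U, the closed subset H(y) := {g ∈ G : g·y ∈ Y} of G has dimension dim(Y) + dim(G) − dim(X). Then there is a nonempty open subset V ⊆ X such that every x ∈ V lies in the G-orbit of some element of Y. -/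
open AlgebraicGeometry CategoryTheory CategoryTheory.Limits

universe u

/-- Data of an algebraic group `G` over a base `S` acting on a scheme `X` over `S`:
structure morphisms `p, q`, multiplication, unit, inverse, and an action morphism, all
compatible with the projections to `S`. -/
structure SchemeGroupAction (S G X : Scheme.{u}) where
  p : G ⟶ S
  q : X ⟶ S
  mul : pullback p p ⟶ G
  mul_over : mul ≫ p = pullback.fst p p ≫ p
  e : S ⟶ G
  e_sec : e ≫ p = 𝟙 S
  inv : G ⟶ G
  inv_over : inv ≫ p = p
  act : pullback p q ⟶ X
  act_over : act ≫ q = pullback.snd p q ≫ q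

namespace SchemeGroupAction

variable {S G X : Scheme.{u}} (D : SchemeGroupAction S G X)

/-- Product of two generalized points of `G` lying over the same point of `S`. -/
noncomputable def mulElt {W : Scheme.{u}} (g h : W ⟶ G) (hgh : g ≫ D.p = h ≫ D.p) :
    W ⟶ G :=
  pullback.lift g h hgh ≫ D.mul

/-- Action of a generalized point of `G` on one of `X`, over the same point of `S`. -/
noncomputable def actElt {W : Scheme.{u}} (g : W ⟶ G) (x : W ⟶ X) (hgx : g ≫ D.p = x ≫ D.q) :
    W ⟶ X :=
  pullback.lift g x hgx ≫ D.act

@[simp] lemma mulElt_over {W : Scheme.{u}} (g h : W ⟶ G) (hgh : g ≫ D.p = h ≫ D.p) :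
    D.mulElt g h hgh ≫ D.p = g ≫ D.p := by
  rw [mulElt, Category.assoc, D.mul_over, pullback.lift_fst_assoc]

@[simp] lemma actElt_over {W : Scheme.{u}} (g : W ⟶ G) (x : W ⟶ X)
    (hgx : g ≫ D.p = x ≫ D.q) :
    D.actElt g x hgx ≫ D.q = x ≫ D.q := by
  rw [actElt, Category.assoc, D.act_over, pullback.lift_snd_assoc]

/-- The group and action axioms, expressed on generalized points. -/
structure IsGroupAction : Prop where
  mul_assoc : ∀ (W : Scheme.{u}) (s : W ⟶ S) (g h l : W ⟶ G)
      (hg : g ≫ D.p = s) (hh : h ≫ D.p = s) (hl : l ≫ D.p = s),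
      D.mulElt (D.mulElt g h (hg.trans hh.symm)) l
          (by rw [D.mulElt_over, hg, hl])
        = D.mulElt g (D.mulElt h l (hh.trans hl.symm))
          (by rw [D.mulElt_over, hg, hh])
  one_mul : ∀ (W : Scheme.{u}) (g : W ⟶ G),
      D.mulElt (g ≫ D.p ≫ D.e) g
          (by rw [Category.assoc, Category.assoc, D.e_sec, Category.comp_id]) = g
  mul_one : ∀ (W : Scheme.{u}) (g : W ⟶ G),
      D.mulElt g (g ≫ D.p ≫ D.e)
          (by rw [Category.assoc, Category.assoc, D.e_sec, Category.comp_id]) = g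
  mul_inv : ∀ (W : Scheme.{u}) (g : W ⟶ G),
      D.mulElt g (g ≫ D.inv) (by rw [Category.assoc, D.inv_over]) = g ≫ D.p ≫ D.e
  inv_mul : ∀ (W : Scheme.{u}) (g : W ⟶ G),
      D.mulElt (g ≫ D.inv) g (by rw [Category.assoc, D.inv_over]) = g ≫ D.p ≫ D.e
  one_act : ∀ (W : Scheme.{u}) (x : W ⟶ X),
      D.actElt (x ≫ D.q ≫ D.e) x
          (by rw [Category.assoc, Category.assoc, D.e_sec, Category.comp_id]) = x
  act_assoc : ∀ (W : Scheme.{u}) (s : W ⟶ S) (g h : W ⟶ G) (x : W ⟶ X)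
      (hg : g ≫ D.p = s) (hh : h ≫ D.p = s) (hx : x ≫ D.q = s),
      D.actElt (D.mulElt g h (hg.trans hh.symm)) x
          (by rw [D.mulElt_over, hg, hx])
        = D.actElt g (D.actElt h x (hh.trans hx.symm))
          (by rw [D.actElt_over, hg, hx])

end SchemeGroupAction

/-!
Let `Z = {(g, x, y) | g · x = y, y ∈ Y}` and `π : Z ⟶ X`, `(g, x, y) ↦ x`; a `k`-point of `X` in
the image of `π` lies in an orbit that meets `Y`. The shear `(g, x) ↦ (g, g · x)` is an
automorphism of `G ×ₖ X`, so the action map is flat, and so is `Z ⟶ Y`. Fix a `k`-point `y` of `Y`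
and let `z = (e, y, y) ∈ Z`. The morphism `g ↦ (g, g⁻¹ · y, y)` embeds `G` in `Z` and carries a
chain of generizations of `e` to one of `z` lying over `y`; lifting generizations of `y` along the
flat map `Z ⟶ Y` prolongs that chain by `dim Y` steps. Hence `dim 𝒪_{Z,z} ≥ dim G + dim Y`.

The fibre of `π` over `y` is `H(y)`, so `dim H(y) + dim X ≤ dim Y + dim G` is the reverse of the
general inequality `dim 𝒪_{Z,z} ≤ dim 𝒪_{X,y} + dim 𝒪_{π⁻¹(y),z}`. When `Spec A` is irreducible, a
ring map `A → B` for which this reverse inequality holds at some prime has nilpotent kernel `I`: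
otherwise `A ⧸ I` has smaller local dimension than `A`, and the general inequality over `A ⧸ I`
is violated. So `π` is dominant, and its image has an interior point by Chevalley's theorem.

Points of a scheme are ordered by specialization, `x ≤ y` meaning that `x` lies in the closure of
`y`. Thus `Order.coheight x` is the dimension of the local ring at `x`, whereas on
`PrimeSpectrum` the order is reversed and the same number is `Order.height`.
-/

section Order

open Order

variable {α β : Type*} [Preorder α] [Preorder β] {f : α → β}

lemma coheight_add_le_of_strictMono (hf : StrictMono f) {n : ℕ∞}
    (hn : ∀ a, n ≤ coheight (f a)) (a : α) : coheight a + n ≤ coheight (f a) := by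
  have length_add_le (p : LTSeries α) : p.length + n ≤ coheight (f p.head) := by
    induction p using RelSeries.inductionOn with
    | singleton x => simpa using hn x
    | cons p x hx ih =>
      calc ((p.cons x hx).length : ℕ∞) + n = p.length + n + 1 := by
            simp only [RelSeries.cons_length, Nat.cast_add, Nat.cast_one]; abel
        _ ≤ coheight (f p.head) + 1 := by gcongr
        _ ≤ coheight (f (p.cons x hx).head) := coheight_add_one_le (hf hx)
  have : Nonempty {p : LTSeries α // p.head = a} := ⟨RelSeries.singleton _ a, rfl⟩
  rw [coheight_eq_iSup_head_eq, iSup_subtype', ENat.iSup_add]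
  exact iSup_le fun ⟨p, hp⟩ => hp ▸ length_add_le p

lemma coheight_apply_le_of_lifts {f : β → α} (hf : Monotone f)
    (hlift : ∀ b a, f b ≤ a → ∃ b', b ≤ b' ∧ f b' = a) (b : β) :
    coheight (f b) ≤ coheight b := by
  have length_le (p : LTSeries α) : ∀ b, f b = p.head → p.length ≤ coheight b := by
    induction p using RelSeries.inductionOn with
    | singleton x => simp
    | cons p x hx ih =>
      intro b hb
      obtain ⟨b', hbb', hb'⟩ := hlift b p.head (hb.trans_le hx.le)
      have hlt : b < b' := hbb'.lt_of_not_ge fun h =>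
        hx.not_ge ((hb'.symm.trans_le (hf h)).trans_eq hb)
      simpa using! (add_le_add_left (ih b' hb') 1).trans (coheight_add_one_le hlt)
  exact coheight_le fun p hp => length_le p b hp.symm

end Order

section Topology

variable {T : Type*} [TopologicalSpace T] {s : Set T}

lemma interior_frontier_eq_empty_of_isConstructible (hs : Topology.IsConstructible s) :
    interior (frontier s) = ∅ := by
  induction hs using Topology.IsConstructible.empty_union_induction with
  | open_retrocompact U hU _ =>
    rw [← frontier_compl]; exact interior_frontier hU.isClosed_compl
  | union s _ t _ hs ht =>
    refine Set.subset_eq_empty (interior_mono ?_)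
      (interior_union_isClosed_of_interior_empty isClosed_frontier ht |>.trans hs)
    exact (frontier_union_subset s t).trans
      (Set.union_subset_union Set.inter_subset_left Set.inter_subset_right)
  | compl s _ hs => rwa [frontier_compl]

lemma nonempty_interior_of_isConstructible_of_dense [Nonempty T]
    (hs : Topology.IsConstructible s) (hd : Dense s) : (interior s).Nonempty := by
  by_contra! h
  have := interior_frontier_eq_empty_of_isConstructible hs
  rw [frontier, h, hd.closure_eq, Set.sdiff_empty, interior_univ] at this
  exact Set.univ_nonempty.ne_empty this

end Topology

section CommAlg

open PrimeSpectrum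

variable (k : Type*) [Field k]

lemma height_eq_of_isMaximal_mvPolynomial {n : ℕ} (M : Ideal (MvPolynomial (Fin n) k))
    [M.IsMaximal] : M.height = n := by
  induction n with
  | zero =>
    have hle := Ideal.height_le_ringKrullDim_of_isPrime (I := M)
    rw [ringKrullDim_eq_of_ringEquiv (MvPolynomial.isEmptyRingEquiv k (Fin 0)),
      ringKrullDim_eq_zero_of_field] at hle
    simpa using hle
  | succ n ih =>
    let e := (MvPolynomial.finSuccEquiv k n).toRingEquiv
    let m := (M.map e).comap (Polynomial.C : MvPolynomial (Fin n) k →+* _)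
    have : (M.map e).IsMaximal := Ideal.map_isMaximal_of_equiv e
    have : m.IsMaximal := Polynomial.isMaximal_comap_C_of_isJacobsonRing _
    have : (M.map e).LiesOver m := ⟨rfl⟩
    rw [← RingEquiv.height_map e, Polynomial.height_eq_height_add_one m, ih, Nat.cast_add_one]

lemma height_eq_ringKrullDim_of_isDomain {A : Type*} [CommRing A] [IsDomain A] [Algebra k A]
    [Algebra.FiniteType k A] (M : Ideal A) [M.IsMaximal] :
    (M.height : WithBot ℕ∞) = ringKrullDim A := by
  refine le_antisymm Ideal.height_le_ringKrullDim_of_isPrime ?_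
  obtain ⟨n, g, hinj, hint⟩ := exists_integral_inj_algHom_of_fg k A
  have : IsNoetherianRing A := Algebra.FiniteType.isNoetherianRing k A
  let B := MvPolynomial (Fin n) k
  algebraize [g.toRingHom]
  have : Algebra.IsIntegral B A := ⟨hint⟩
  have : FaithfulSMul B A := (faithfulSMul_iff_algebraMap_injective B A).mpr hinj
  calc ringKrullDim A ≤ ringKrullDim B := by
        refine Order.krullDim_le_of_strictMono (comap (algebraMap B A)) fun p q hpq => ?_
        exact Ideal.comap_lt_comap_of_integral_mem_sdiff (I := p.asIdeal) (J := q.asIdeal)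
          hpq.le (Set.exists_of_ssubset hpq).choose_spec (Algebra.IsIntegral.isIntegral _)
    _ = n := by simp [B, MvPolynomial.ringKrullDim_of_isNoetherianRing]
    _ = (M.under B).height := by rw [height_eq_of_isMaximal_mvPolynomial]; rfl
    _ ≤ M.height := by
        rw [Ideal.height_eq_height_add_of_liesOver_of_hasGoingDown (M.under B) M]
        exact_mod_cast le_self_add

lemma height_eq_ringKrullDim_of_irreducibleSpace {A : Type*} [CommRing A] [Algebra k A]
    [Algebra.FiniteType k A] [IrreducibleSpace (PrimeSpectrum A)] (M : Ideal A) [hM : M.IsMaximal] :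
    (M.height : WithBot ℕ∞) = ringKrullDim A := by
  refine le_antisymm Ideal.height_le_ringKrullDim_of_isPrime ?_
  let N := nilradical A
  have : N.IsPrime := irreducibleSpace_iff_isPrime_nilradical.mp inferInstance
  have hsurj := Ideal.Quotient.mk_surjective (I := N)
  have hcomap : (M.map (Ideal.Quotient.mk N)).comap (Ideal.Quotient.mk N) = M :=
    Ideal.comap_map_mk (nilradical_le_prime M)
  have : (M.map (Ideal.Quotient.mk N)).IsMaximal :=
    Ideal.IsMaximal.map_of_surjective_of_ker_le hsurj
      (Ideal.mk_ker.trans_le (nilradical_le_prime M))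
  have hhomeo : IsHomeomorph (comap (Ideal.Quotient.mk N)) :=
    isHomeomorph_comap _ (fun x => ⟨1, one_pos, by simpa using! hsurj x⟩) Ideal.mk_ker.le
  calc ringKrullDim A = ringKrullDim (A ⧸ N) := by
        simp only [← topologicalKrullDim_eq_ringKrullDim, hhomeo.topologicalKrullDim_eq]
    _ = (M.map (Ideal.Quotient.mk N)).height := (height_eq_ringKrullDim_of_isDomain k _).symm
    _ ≤ M.height := by
        have hle := Order.height_le_height_apply_of_strictMono _
          (RingHom.strictMono_comap_of_surjective hsurj)
          ⟨M.map (Ideal.Quotient.mk N), inferInstance⟩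
        rw [← height_eq_orderHeight, ← height_eq_orderHeight] at hle
        simpa [hcomap] using! hle

end CommAlg

section Dominance

open PrimeSpectrum

lemma height_add_one_le_height_comap_mk {A : Type*} [CommRing A]
    [IrreducibleSpace (PrimeSpectrum A)] {I : Ideal A} (hI : ¬ I ≤ nilradical A)
    (q : Ideal (A ⧸ I)) [hq : q.IsPrime] :
    q.height + 1 ≤ (q.comap (Ideal.Quotient.mk I)).height := by
  have : (nilradical A).IsPrime := irreducibleSpace_iff_isPrime_nilradical.mp inferInstance
  have one_le (r : PrimeSpectrum (A ⧸ I)) :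
      1 ≤ Order.height (comap (Ideal.Quotient.mk I) r) := by
    refine Order.one_le_iff_pos.mpr (Order.height_pos.mpr fun hmin => hI ?_)
    have hle : (comap (Ideal.Quotient.mk I) r).asIdeal ≤ nilradical A :=
      hmin (b := ⟨nilradical A, inferInstance⟩) (nilradical_le_prime _)
    refine le_trans ?_ hle
    conv_lhs => rw [← Ideal.mk_ker (I := I)]
    exact Ideal.comap_mono bot_le
  have hle : Order.height (⟨q, hq⟩ : PrimeSpectrum (A ⧸ I)) + 1 ≤
      Order.height (comap (Ideal.Quotient.mk I) ⟨q, hq⟩) :=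
    coheight_add_le_of_strictMono
      (RingHom.strictMono_comap_of_surjective Ideal.Quotient.mk_surjective).dual one_le
      (OrderDual.toDual ⟨q, hq⟩)
  rwa [← height_eq_orderHeight, ← height_eq_orderHeight] at hle

variable {A B : Type*} [CommRing A] [CommRing B] [Algebra A B]
  [IrreducibleSpace (PrimeSpectrum A)]

lemma ker_algebraMap_le_nilradical_of_height_le [IsNoetherianRing A] [IsNoetherianRing B]
    (P : Ideal B) [P.IsPrime]
    (h : (P.under A).height + (P.map (Ideal.Quotient.mk ((P.under A).map (algebraMap A B)))).height
      ≤ P.height) : RingHom.ker (algebraMap A B) ≤ nilradical A := by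
  by_contra hI
  let I := RingHom.ker (algebraMap A B)
  let : Algebra (A ⧸ I) B := (RingHom.kerLift (algebraMap A B)).toAlgebra
  have : IsScalarTower A (A ⧸ I) B := .of_algebraMap_eq' rfl
  have hmap : (P.under (A ⧸ I)).map (algebraMap (A ⧸ I) B) = (P.under A).map (algebraMap A B) := by
    rw [← Ideal.under_under (B := A ⧸ I), IsScalarTower.algebraMap_eq A (A ⧸ I) B, ← Ideal.map_map]
    congr 1
    exact (Ideal.map_comap_of_surjective _ Ideal.Quotient.mk_surjective _).symm
  have hdrop : (P.under (A ⧸ I)).height + 1 ≤ (P.under A).height := by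
    simpa only [← Ideal.under_under (A := A) (B := A ⧸ I) P] using!
      height_add_one_le_height_comap_mk hI (P.under (A ⧸ I))
  have hle := Ideal.height_le_height_add_of_liesOver (P.under (A ⧸ I)) P
  rw [hmap] at hle
  set F := (P.map (Ideal.Quotient.mk ((P.under A).map (algebraMap A B)))).height
  have hlt : P.height + 1 ≤ P.height := calc
    P.height + 1 ≤ (P.under (A ⧸ I)).height + 1 + F := by rw [add_right_comm]; gcongr
    _ ≤ (P.under A).height + F := by gcongr
    _ ≤ P.height := h
  exact (ENat.add_one_le_iff (Ideal.height_ne_top_of_isPrime)).mp hlt |>.false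

lemma nonempty_interior_range_comap_of_height_le [IsNoetherianRing A] [Algebra.FiniteType A B]
    (P : Ideal B) [P.IsPrime]
    (h : (P.under A).height + (P.map (Ideal.Quotient.mk ((P.under A).map (algebraMap A B)))).height
      ≤ P.height) : (interior (Set.range (comap (algebraMap A B)))).Nonempty := by
  have : IsNoetherianRing B := Algebra.FiniteType.isNoetherianRing A B
  refine nonempty_interior_of_isConstructible_of_dense ?_ ?_
  · refine isConstructible_range_comap (RingHom.FinitePresentation.of_finiteType.mp ?_)
    exact RingHom.finiteType_algebraMap.mpr ‹_›
  · exact (denseRange_comap_iff_ker_le_nilRadical _).mpr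
      (ker_algebraMap_le_nilradical_of_height_le P h)

end Dominance

section Fibre

open PrimeSpectrum

variable {A B : Type*} [CommRing A] [CommRing B] [Algebra A B]

lemma comap_comap_mk_eq_of_le (P : PrimeSpectrum B)
    {q : PrimeSpectrum (B ⧸ (P.asIdeal.under A).map (algebraMap A B))}
    (hq : comap (Ideal.Quotient.mk _) q ≤ P) :
    comap (algebraMap A B) (comap (Ideal.Quotient.mk _) q) = comap (algebraMap A B) P := by
  refine le_antisymm (Ideal.comap_mono hq) ?_
  refine Ideal.map_le_iff_le_comap.mp (?_ : (P.asIdeal.under A).map (algebraMap A B) ≤ _)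
  conv_lhs => rw [← Ideal.mk_ker (I := (P.asIdeal.under A).map (algebraMap A B))]
  exact Ideal.comap_mono bot_le

lemma height_map_mk_le_height_fibre (P : PrimeSpectrum B) :
    (P.asIdeal.map (Ideal.Quotient.mk ((P.asIdeal.under A).map (algebraMap A B)))).height ≤
      Order.height (⟨P, rfl⟩ : comap (algebraMap A B) ⁻¹' {comap (algebraMap A B) P}) := by
  set J := (P.asIdeal.under A).map (algebraMap A B)
  have hJ : J ≤ P.asIdeal := Ideal.map_comap_le
  have hcomap : (P.asIdeal.map (Ideal.Quotient.mk J)).comap (Ideal.Quotient.mk J) = P.asIdeal :=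
    Ideal.comap_map_mk hJ
  let P' : PrimeSpectrum (B ⧸ J) := ⟨P.asIdeal.map (Ideal.Quotient.mk J),
    Ideal.map_isPrime_of_surjective Ideal.Quotient.mk_surjective (Ideal.mk_ker.trans_le hJ)⟩
  have hP' : comap (Ideal.Quotient.mk J) P' = P := PrimeSpectrum.ext hcomap
  have hmono := RingHom.strictMono_comap_of_surjective (Ideal.Quotient.mk_surjective (I := J))
  let g : Set.Iic P' → comap (algebraMap A B) ⁻¹' {comap (algebraMap A B) P} := fun q =>
    ⟨comap (Ideal.Quotient.mk J) q,
      comap_comap_mk_eq_of_le P ((hmono.monotone q.2).trans_eq hP')⟩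
  have hg : StrictMono g := fun q q' h => hmono h
  have hheight : Order.height P' = Order.height (⊤ : Set.Iic P') := WithBot.coe_injective <|
    (Order.height_eq_krullDim_Iic P').trans Order.height_top_eq_krullDim.symm
  calc (P.asIdeal.map (Ideal.Quotient.mk J)).height = Order.height P' := height_eq_orderHeight P'
    _ ≤ Order.height (g ⊤) := hheight.trans_le (Order.height_le_height_apply_of_strictMono g hg ⊤)
    _ = _ := congrArg Order.height (Subtype.ext hP')

end Fibre

section Schemes

open Order

variable {X Y : Scheme.{u}}

lemma le_iff_apply_le_apply_of_isInducing {f : X ⟶ Y} (hf : Topology.IsInducing f) (x y : X) :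
    x ≤ y ↔ f x ≤ f y :=
  hf.specializes_iff.symm

lemma isEmbedding_of_comp_eq_id {f : X ⟶ Y} {r : Y ⟶ X} (h : f ≫ r = 𝟙 X) :
    Topology.IsEmbedding f := by
  have hinv : Function.LeftInverse r f := fun x => by rw [← Scheme.Hom.comp_apply, h]; rfl
  exact hinv.isEmbedding r.continuous f.continuous

lemma coheight_apply_eq_height_of_isOpenImmersion {R : CommRingCat.{u}} (f : Spec R ⟶ X)
    [IsOpenImmersion f] (P : Spec R) : coheight (f P) = P.asIdeal.height := by
  rw [idealHeight_eq_coheight]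
  exact coheight_eq_of_isOpenImmersion f

lemma coheight_fromSpec {U : X.Opens} (hU : IsAffineOpen U) (P : PrimeSpectrum Γ(X, U)) :
    coheight (hU.fromSpec P) = P.asIdeal.height :=
  coheight_apply_eq_height_of_isOpenImmersion hU.fromSpec P

lemma fromSpec_strictAnti {U : X.Opens} (hU : IsAffineOpen U) :
    StrictAnti fun P : PrimeSpectrum Γ(X, U) => hU.fromSpec P :=
  strictAnti_of_le_iff_le fun P Q => (PrimeSpectrum.le_iff_specializes P Q).trans
    hU.fromSpec.isOpenEmbedding.isInducing.specializes_iff.symm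

lemma height_fibre_comap_le_coheight_fibre (f : X ⟶ Y) {V : Y.Opens} {U : X.Opens}
    (hV : IsAffineOpen V) (hU : IsAffineOpen U) (hUV : U ≤ f ⁻¹ᵁ V) (P : PrimeSpectrum Γ(X, U)) :
    Order.height (⟨P, rfl⟩ : PrimeSpectrum.comap (f.appLE V U hUV).hom ⁻¹'
        {PrimeSpectrum.comap (f.appLE V U hUV).hom P}) ≤
      coheight (⟨hU.fromSpec P, rfl⟩ : f ⁻¹' {f (hU.fromSpec P)}) := by
  set φ := PrimeSpectrum.comap (f.appLE V U hUV).hom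
  have hφ (Q : PrimeSpectrum Γ(X, U)) : f (hU.fromSpec Q) = hV.fromSpec (φ Q) :=
    congr($(hV.SpecMap_appLE_fromSpec f hU hUV) Q).symm
  let j : (φ ⁻¹' {φ P})ᵒᵈ → f ⁻¹' {f (hU.fromSpec P)} := fun Q =>
    ⟨hU.fromSpec (OrderDual.ofDual Q).1,
      (hφ _).trans ((congrArg hV.fromSpec (OrderDual.ofDual Q).2).trans (hφ P).symm)⟩
  have hj : StrictMono j := fun _ _ hQ => fromSpec_strictAnti hU hQ
  exact coheight_le_coheight_apply_of_strictMono j hj (OrderDual.toDual ⟨P, rfl⟩)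

lemma exists_fromSpec_eq {U : X.Opens} (hU : IsAffineOpen U) {x : X} (hx : x ∈ U) :
    ∃ P : PrimeSpectrum Γ(X, U), hU.fromSpec P = x := by
  rwa [← SetLike.mem_coe, ← hU.range_fromSpec] at hx

lemma nonempty_interior_range_of_coheight_le (f : X ⟶ Y) [LocallyOfFiniteType f]
    [IsLocallyNoetherian Y] [IrreducibleSpace Y] {x : X} {y : Y} (hxy : f x = y)
    (h : coheight y + coheight (⟨x, hxy⟩ : f ⁻¹' {y}) ≤ coheight x) :
    (interior (Set.range f)).Nonempty := by
  subst hxy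
  obtain ⟨V, hV, hxV, -⟩ := exists_isAffineOpen_mem_and_subset (x := f x) (U := ⊤) trivial
  obtain ⟨U, hU, hxU, hUV⟩ := exists_isAffineOpen_mem_and_subset (x := x) (U := f ⁻¹ᵁ V) hxV
  obtain ⟨P, rfl⟩ := exists_fromSpec_eq hU hxU
  let : Algebra Γ(Y, V) Γ(X, U) := (f.appLE V U hUV).hom.toAlgebra
  let φ := PrimeSpectrum.comap (algebraMap Γ(Y, V) Γ(X, U))
  have hφ (Q : PrimeSpectrum Γ(X, U)) : f (hU.fromSpec Q) = hV.fromSpec (φ Q) :=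
    congr($(hV.SpecMap_appLE_fromSpec f hU hUV) Q).symm
  have : Algebra.FiniteType Γ(Y, V) Γ(X, U) := f.finiteType_appLE hV hU hUV
  have : IsNoetherianRing Γ(Y, V) := IsLocallyNoetherian.component_noetherian ⟨V, hV⟩
  have : IrreducibleSpace (PrimeSpectrum Γ(Y, V)) :=
    have : Nonempty (Spec Γ(Y, V)) := ⟨φ P⟩
    hV.fromSpec.isOpenEmbedding.irreducibleSpace
  have hbase : coheight (f (hU.fromSpec P)) = (P.asIdeal.under Γ(Y, V)).height := by
    rw [hφ]; exact coheight_fromSpec hV (φ P)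
  have hfib := (height_map_mk_le_height_fibre (A := Γ(Y, V)) P).trans
    (height_fibre_comap_le_coheight_fibre f hV hU hUV P)
  have hP := P.2
  have hint : (interior (Set.range φ)).Nonempty := by
    refine nonempty_interior_range_comap_of_height_le P.asIdeal ?_
    rw [hbase, coheight_fromSpec] at h
    exact (add_le_add_right hfib _).trans h
  have hsub : hV.fromSpec '' interior (Set.range φ) ⊆ Set.range f := by
    rintro _ ⟨_, hQ, rfl⟩
    obtain ⟨Q, rfl⟩ := interior_subset hQ
    exact ⟨hU.fromSpec Q, hφ Q⟩
  exact (hint.image hV.fromSpec).mono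
    (interior_maximal hsub (hV.fromSpec.isOpenEmbedding.isOpenMap _ isOpen_interior))

end Schemes

section Dimension

open Order

variable {X : Scheme.{u}}

lemma coheight_le_topologicalKrullDim_coe {S : Set X} (x : S) :
    (coheight x : WithBot ℕ∞) ≤ topologicalKrullDim S := by
  let F : S → TopologicalSpace.IrreducibleCloseds S := fun y =>
    ⟨closure {y}, isIrreducible_singleton.closure, isClosed_closure⟩
  have hF (y z : S) : y ≤ z ↔ F y ≤ F z :=
    Topology.IsInducing.subtypeVal.specializes_iff.trans specializes_iff_closure_subset
  exact (coheight_le_krullDim x).trans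
    (krullDim_le_of_strictMono F (strictMono_of_le_iff_le hF))

lemma topologicalKrullDim_eq_krullDim (X : Scheme.{u}) : topologicalKrullDim X = krullDim X :=
  krullDim_eq_of_orderIso irreducibleSetEquivPoints

lemma coheight_le_topologicalKrullDim (x : X) :
    (coheight x : WithBot ℕ∞) ≤ topologicalKrullDim X :=
  (coheight_le_krullDim x).trans_eq (topologicalKrullDim_eq_krullDim X).symm

lemma topologicalKrullDim_le_of_forall_isClosed [JacobsonSpace X] {n : ℕ∞}
    (h : ∀ x : X, IsClosed {x} → coheight x ≤ n) : topologicalKrullDim X ≤ n := by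
  rw [topologicalKrullDim_eq_krullDim, krullDim_eq_iSup_coheight]
  refine iSup_le fun x => ?_
  obtain ⟨z, hxz, hz⟩ := nonempty_inter_closedPoints (Z := closure {x})
    ⟨x, subset_closure rfl⟩ isClosed_closure.isLocallyClosed
  have hzx : z ≤ x := specializes_iff_mem_closure.mpr hxz
  exact_mod_cast (coheight_anti hzx).trans (h z hz)

variable {k : Type u} [Field k] (f : X ⟶ Spec (CommRingCat.of k)) [LocallyOfFiniteType f]

include f

lemma coheight_eq_ringKrullDim_of_isClosed [IrreducibleSpace X] {U : X.Opens}
    (hU : IsAffineOpen U) {x : X} (hxU : x ∈ U) (hx : IsClosed {x}) :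
    (coheight x : WithBot ℕ∞) = ringKrullDim Γ(X, U) := by
  obtain ⟨M, rfl⟩ := exists_fromSpec_eq hU hxU
  let φ := Spec.preimage (hU.fromSpec ≫ f)
  have hφ : LocallyOfFiniteType (Spec.map φ) := by rw [Spec.map_preimage]; infer_instance
  let : Algebra k Γ(X, U) := φ.hom.toAlgebra
  have : Algebra.FiniteType k Γ(X, U) :=
    (HasRingHomProperty.Spec_iff (P := @LocallyOfFiniteType)).mp hφ
  have : IrreducibleSpace (PrimeSpectrum Γ(X, U)) :=
    have : Nonempty (Spec Γ(X, U)) := ⟨M⟩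
    hU.fromSpec.isOpenEmbedding.irreducibleSpace
  have hM : IsClosed ({M} : Set (PrimeSpectrum Γ(X, U))) := by
    have hpre : hU.fromSpec ⁻¹' {hU.fromSpec M} = {M} :=
      Set.ext fun _ => hU.fromSpec.isOpenEmbedding.injective.eq_iff
    exact hpre ▸ hx.preimage hU.fromSpec.continuous
  have := (PrimeSpectrum.isClosed_singleton_iff_isMaximal M).mp hM
  rw [coheight_fromSpec]
  exact height_eq_ringKrullDim_of_irreducibleSpace k M.asIdeal

lemma coheight_eq_topologicalKrullDim_of_isClosed [IrreducibleSpace X] {x : X}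
    (hx : IsClosed {x}) : (coheight x : WithBot ℕ∞) = topologicalKrullDim X := by
  have := LocallyOfFiniteType.jacobsonSpace f
  refine le_antisymm (coheight_le_topologicalKrullDim x)
    (topologicalKrullDim_le_of_forall_isClosed fun z hz => ?_)
  obtain ⟨U, hU, hxU, -⟩ := exists_isAffineOpen_mem_and_subset (x := x) (U := ⊤) trivial
  obtain ⟨V, hV, hzV, -⟩ := exists_isAffineOpen_mem_and_subset (x := z) (U := ⊤) trivial
  obtain ⟨t, ⟨htU, htV⟩, ht⟩ := nonempty_inter_closedPoints
    (nonempty_preirreducible_inter U.2 V.2 ⟨x, hxU⟩ ⟨z, hzV⟩) (U.2.inter V.2).isLocallyClosed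
  have hUV := (coheight_eq_ringKrullDim_of_isClosed f hU htU ht).symm.trans
    (coheight_eq_ringKrullDim_of_isClosed f hV htV ht)
  have hzx : (coheight z : WithBot ℕ∞) = coheight x := by
    rw [coheight_eq_ringKrullDim_of_isClosed f hV hzV hz, ← hUV,
      coheight_eq_ringKrullDim_of_isClosed f hU hxU hx]
  exact_mod_cast hzx.le

end Dimension

namespace SchemeGroupAction

variable {S G X : Scheme.{u}} (D : SchemeGroupAction S G X) {W W' : Scheme.{u}}

lemma comp_mulElt (φ : W' ⟶ W) (g h : W ⟶ G) (hgh : g ≫ D.p = h ≫ D.p) :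
    φ ≫ D.mulElt g h hgh = D.mulElt (φ ≫ g) (φ ≫ h) (by simp only [Category.assoc, hgh]) := by
  simp only [mulElt, ← Category.assoc]
  congr 1
  ext <;> simp only [Category.assoc, pullback.lift_fst, pullback.lift_snd]

lemma comp_actElt (φ : W' ⟶ W) (g : W ⟶ G) (x : W ⟶ X) (hgx : g ≫ D.p = x ≫ D.q) :
    φ ≫ D.actElt g x hgx = D.actElt (φ ≫ g) (φ ≫ x) (by simp only [Category.assoc, hgx]) := by
  simp only [actElt, ← Category.assoc]
  congr 1
  ext <;> simp only [Category.assoc, pullback.lift_fst, pullback.lift_snd]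

lemma actElt_fst_snd :
    D.actElt (pullback.fst D.p D.q) (pullback.snd D.p D.q) pullback.condition = D.act := by
  have hlift : pullback.lift (pullback.fst D.p D.q) (pullback.snd D.p D.q) pullback.condition =
      𝟙 _ := by
    ext <;> simp only [pullback.lift_fst, pullback.lift_snd, Category.id_comp]
  rw [actElt, hlift, Category.id_comp]

lemma comp_act (w : W ⟶ pullback D.p D.q) : w ≫ D.act =
    D.actElt (w ≫ pullback.fst D.p D.q) (w ≫ pullback.snd D.p D.q)
      (by simp only [Category.assoc, pullback.condition]) := by
  conv_lhs => rw [← D.actElt_fst_snd]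
  exact D.comp_actElt _ _ _ _

variable {D}

namespace IsGroupAction

variable (hD : D.IsGroupAction)
include hD

lemma act_inv_act (g : W ⟶ G) (x : W ⟶ X) (h : g ≫ D.p = x ≫ D.q) :
    D.actElt g (D.actElt (g ≫ D.inv) x (by rw [Category.assoc, D.inv_over, h]))
      (by rw [D.actElt_over, h]) = x := by
  rw [← hD.act_assoc W (g ≫ D.p) g (g ≫ D.inv) x rfl (by rw [Category.assoc, D.inv_over]) h.symm]
  simp only [hD.mul_inv, reassoc_of% h]
  exact hD.one_act W x

lemma inv_act_act (g : W ⟶ G) (x : W ⟶ X) (h : g ≫ D.p = x ≫ D.q) :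
    D.actElt (g ≫ D.inv) (D.actElt g x h)
      (by rw [D.actElt_over, Category.assoc, D.inv_over, h]) = x := by
  rw [← hD.act_assoc W (g ≫ D.p) (g ≫ D.inv) g x (by rw [Category.assoc, D.inv_over]) rfl h.symm]
  simp only [hD.inv_mul, reassoc_of% h]
  exact hD.one_act W x

lemma isIso_shear : IsIso (pullback.lift (pullback.fst D.p D.q) D.act
    (by rw [D.act_over, pullback.condition])) := by
  refine ⟨pullback.lift (pullback.fst D.p D.q)
    (D.actElt (pullback.fst D.p D.q ≫ D.inv) (pullback.snd D.p D.q)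
      (by rw [Category.assoc, D.inv_over, pullback.condition]))
    (by rw [D.actElt_over, pullback.condition]), ?_, ?_⟩
  · ext
    · simp only [Category.assoc, pullback.lift_fst, Category.id_comp]
    · simp only [Category.assoc, pullback.lift_snd, comp_actElt, pullback.lift_fst_assoc,
        Category.id_comp]
      simp only [← D.actElt_fst_snd]
      exact hD.inv_act_act _ _ pullback.condition
  · ext
    · simp only [Category.assoc, pullback.lift_fst, Category.id_comp]
    · simp only [Category.assoc, pullback.lift_snd, comp_act, pullback.lift_fst, Category.id_comp]
      exact hD.act_inv_act _ _ pullback.condition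

lemma flat_act [Flat D.p] : Flat D.act := by
  have := hD.isIso_shear
  rw [← pullback.lift_snd (pullback.fst D.p D.q) D.act (by rw [D.act_over, pullback.condition])]
  infer_instance

lemma e_inv : D.e ≫ D.inv = D.e := by
  have h := hD.one_mul S (D.e ≫ D.inv)
  simp only [Category.assoc, reassoc_of% D.inv_over, reassoc_of% D.e_sec, hD.mul_inv] at h
  exact h.symm

end IsGroupAction

variable (D) in
/-- Left translation `h ↦ g · h` by a section `g` of the group, an automorphism that carries the
unit to `g`. -/
noncomputable def leftTranslation (g : S ⟶ G) (hg : g ≫ D.p = 𝟙 S) : G ⟶ G :=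
  D.mulElt (D.p ≫ g) (𝟙 G) (by simp only [Category.assoc, hg, Category.comp_id, Category.id_comp])

lemma comp_leftTranslation (g : S ⟶ G) (hg : g ≫ D.p = 𝟙 S) (h : W ⟶ G) :
    h ≫ D.leftTranslation g hg = D.mulElt (h ≫ D.p ≫ g) h
      (by simp only [Category.assoc, hg, Category.comp_id]) := by
  simp only [leftTranslation, comp_mulElt, Category.comp_id]

namespace IsGroupAction

variable (hD : D.IsGroupAction)
include hD

lemma e_leftTranslation (g : S ⟶ G) (hg : g ≫ D.p = 𝟙 S) :
    D.e ≫ D.leftTranslation g hg = g := by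
  have h := hD.mul_one S g
  simp only [reassoc_of% hg] at h
  simpa only [comp_leftTranslation, reassoc_of% D.e_sec] using h

lemma leftTranslation_comp (g h : S ⟶ G) (hg : g ≫ D.p = 𝟙 S) (hh : h ≫ D.p = 𝟙 S) :
    D.leftTranslation h hh ≫ D.leftTranslation g hg =
      D.leftTranslation (D.mulElt g h (hg.trans hh.symm)) (by rw [D.mulElt_over, hg]) := by
  have hassoc := hD.mul_assoc G D.p (D.p ≫ g) (D.p ≫ h) (𝟙 G)
    (by simp [hg]) (by simp [hh]) (by simp)
  have hover : D.leftTranslation h hh ≫ D.p = D.p := by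
    simp only [leftTranslation, mulElt_over, Category.assoc, hh, Category.comp_id]
  simp only [comp_leftTranslation, reassoc_of% hover]
  simpa only [leftTranslation, comp_mulElt] using hassoc.symm

lemma leftTranslation_e : D.leftTranslation D.e D.e_sec = 𝟙 G := by
  simpa only [leftTranslation, Category.id_comp] using hD.one_mul G (𝟙 G)

lemma isIso_leftTranslation (g : S ⟶ G) (hg : g ≫ D.p = 𝟙 S) :
    IsIso (D.leftTranslation g hg) := by
  have hg' : (g ≫ D.inv) ≫ D.p = 𝟙 S := by rw [Category.assoc, D.inv_over, hg]
  refine ⟨D.leftTranslation (g ≫ D.inv) hg', ?_, ?_⟩ <;>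
    simp only [hD.leftTranslation_comp, hD.inv_mul, hD.mul_inv, reassoc_of% hg,
      hD.leftTranslation_e]

end IsGroupAction

open Order

variable {S G X Y : Scheme.{u}} {D : SchemeGroupAction S G X}

variable (D) in
/-- The inclusion `g ↦ (g, x)`, which identifies `G` with the fibre of `G ×ₛ X ⟶ X` over a section
`x` of `X`. -/
noncomputable def pointIncl (x : S ⟶ X) (hx : x ≫ D.q = 𝟙 S) : G ⟶ pullback D.p D.q :=
  pullback.lift (𝟙 G) (D.p ≫ x) (by rw [Category.id_comp, Category.assoc, hx, Category.comp_id])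

variable (D) in
/-- The orbit map `g ↦ g · x` of a section `x` of `X`; the preimage of `Y` under it is `H(x)`. -/
noncomputable def orbitMap (x : S ⟶ X) (hx : x ≫ D.q = 𝟙 S) : G ⟶ X :=
  D.pointIncl x hx ≫ D.act

variable (D) in
/-- The projection `(g, x, y) ↦ x` from the incidence scheme `{(g, x, y) | g · x = i y}` of a
morphism `i : Y ⟶ X`. A point of `X` is in its image when its orbit meets the image of `i`. -/
noncomputable def incidenceToSpace (i : Y ⟶ X) : pullback D.act i ⟶ X :=
  pullback.fst D.act i ≫ pullback.snd D.p D.q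

instance (i : Y ⟶ X) [LocallyOfFiniteType D.p] [LocallyOfFiniteType i] :
    LocallyOfFiniteType (D.incidenceToSpace i) := by
  unfold incidenceToSpace
  infer_instance

variable (D) in
/-- For a section `y` of `Y`, the morphism `g ↦ (g, g⁻¹ · i y, y)` from the group to the incidence
scheme of `i : Y ⟶ X`. It embeds `G` in the fibre over `y` of the projection to `Y`. -/
noncomputable def groupToIncidence (hD : D.IsGroupAction) (i : Y ⟶ X) (y : S ⟶ Y)
    (hy : (y ≫ i) ≫ D.q = 𝟙 S) : G ⟶ pullback D.act i :=
  have hpq : 𝟙 G ≫ D.p = (D.p ≫ y ≫ i) ≫ D.q := by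
    rw [Category.id_comp, Category.assoc, hy, Category.comp_id]
  pullback.lift
    (pullback.lift (𝟙 G) (D.actElt (𝟙 G ≫ D.inv) (D.p ≫ y ≫ i)
      (by rw [Category.assoc, D.inv_over, hpq])) (by rw [D.actElt_over, hpq]))
    (D.p ≫ y)
    (by
      rw [comp_act]
      simp only [pullback.lift_fst, pullback.lift_snd]
      rw [hD.act_inv_act _ _ hpq, Category.assoc])

section groupToIncidence

variable (hD : D.IsGroupAction) (i : Y ⟶ X) (y : S ⟶ Y) (hy : (y ≫ i) ≫ D.q = 𝟙 S)

lemma groupToIncidence_fst_fst :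
    D.groupToIncidence hD i y hy ≫ pullback.fst D.act i ≫ pullback.fst D.p D.q = 𝟙 G := by
  simp only [groupToIncidence, pullback.lift_fst_assoc, pullback.lift_fst]

lemma groupToIncidence_snd :
    D.groupToIncidence hD i y hy ≫ pullback.snd D.act i = D.p ≫ y := by
  simp only [groupToIncidence, pullback.lift_snd]

lemma e_groupToIncidence_incidenceToSpace :
    D.e ≫ D.groupToIncidence hD i y hy ≫ D.incidenceToSpace i = y ≫ i := by
  have h := hD.one_act S (y ≫ i)
  simp only [reassoc_of% (Category.assoc y i D.q).symm.trans hy, Category.assoc] at h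
  simpa only [groupToIncidence, incidenceToSpace, pullback.lift_fst_assoc, pullback.lift_snd,
    comp_actElt, Category.id_comp, hD.e_inv, reassoc_of% D.e_sec] using h

lemma coheight_add_coheight_le_coheight_groupToIncidence [Subsingleton S] [Flat D.p] (s : S)
    (g : G) : coheight g + coheight (y s) ≤ coheight (D.groupToIncidence hD i y hy g) := by
  have := hD.flat_act
  have hinc := (isEmbedding_of_comp_eq_id (groupToIncidence_fst_fst hD i y hy)).isInducing
  have hsnd (g : G) : pullback.snd D.act i (D.groupToIncidence hD i y hy g) = y s := by
    rw [← Scheme.Hom.comp_apply, groupToIncidence_snd, Scheme.Hom.comp_apply,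
      Subsingleton.elim (D.p g) s]
  refine coheight_add_le_of_strictMono
    (strictMono_of_le_iff_le (le_iff_apply_le_apply_of_isInducing hinc)) (fun g => ?_) g
  rw [← hsnd g]
  exact coheight_apply_le_of_lifts (pullback.snd D.act i).continuous.specialization_monotone
    (fun _ _ h => Flat.generalizingMap (pullback.snd D.act i) h) _

end groupToIncidence

section pointIncl

variable (x : S ⟶ X) (hx : x ≫ D.q = 𝟙 S)

lemma pointIncl_fst : D.pointIncl x hx ≫ pullback.fst D.p D.q = 𝟙 G := pullback.lift_fst _ _ _

lemma isPullback_pointIncl : IsPullback (D.pointIncl x hx) D.p (pullback.snd D.p D.q) x := by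
  refine .of_right ?_ (pullback.lift_snd _ _ _) (IsPullback.of_hasPullback D.p D.q)
  rw [pointIncl_fst, hx]
  exact IsPullback.id_horiz D.p

lemma pointIncl_fst_apply {s : S} {w : (pullback D.p D.q : Scheme.{u})}
    (hw : pullback.snd D.p D.q w = x s) : D.pointIncl x hx (pullback.fst D.p D.q w) = w := by
  have hpb := isPullback_pointIncl x hx
  obtain ⟨t, rfl, -⟩ := Scheme.Pullback.exists_preimage_pullback w s hw
  rw [← hpb.isoPullback_inv_fst]
  simp only [← Scheme.Hom.comp_apply, Category.assoc, reassoc_of% pointIncl_fst x hx]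

lemma coheight_fibre_le_topologicalKrullDim (i : Y ⟶ X) [IsClosedImmersion i] {s : S}
    (z : D.incidenceToSpace i ⁻¹' {x s}) : (coheight z : WithBot ℕ∞) ≤
      topologicalKrullDim (D.orbitMap x hx ⁻¹' Set.range i) := by
  have hincl (w : D.incidenceToSpace i ⁻¹' {x s}) :
      D.pointIncl x hx (pullback.fst D.p D.q (pullback.fst D.act i w)) = pullback.fst D.act i w :=
    pointIncl_fst_apply x hx (s := s) w.2
  have horbit (w : D.incidenceToSpace i ⁻¹' {x s}) :
      D.orbitMap x hx (pullback.fst D.p D.q (pullback.fst D.act i w)) ∈ Set.range i := by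
    refine ⟨pullback.snd D.act i w, ?_⟩
    rw [orbitMap, Scheme.Hom.comp_apply, hincl, ← Scheme.Hom.comp_apply, ← Scheme.Hom.comp_apply,
      pullback.condition]
  let m (w : D.incidenceToSpace i ⁻¹' {x s}) : D.orbitMap x hx ⁻¹' Set.range i :=
    ⟨_, horbit w⟩
  have hfst := (pullback.fst D.act i).isEmbedding.isInducing
  have hpt := (isEmbedding_of_comp_eq_id (pointIncl_fst x hx)).isInducing
  have hm : StrictMono m := strictMono_of_le_iff_le fun w w' =>
    calc w ≤ w' ↔ pullback.fst D.act i w ≤ pullback.fst D.act i w' :=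
          le_iff_apply_le_apply_of_isInducing hfst _ _
      _ ↔ m w ≤ m w' := by
          rw [← hincl w, ← hincl w']
          exact (le_iff_apply_le_apply_of_isInducing hpt _ _).symm
  exact (WithBot.coe_le_coe.mpr (coheight_le_coheight_apply_of_strictMono m hm z)).trans
    (coheight_le_topologicalKrullDim_coe _)

end pointIncl

end SchemeGroupAction

section ClosedSubsets

variable {X : Scheme.{u}}

lemma exists_isClosedImmersion_range_eq {Y : Set X} (hY : IsClosed Y) :
    ∃ (Y' : Scheme.{u}) (i : Y' ⟶ X), IsClosedImmersion i ∧ Set.range i = Y :=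
  let I := Scheme.IdealSheafData.vanishingIdeal ⟨Y, hY⟩
  ⟨I.subscheme, I.subschemeι, inferInstance,
    I.range_subschemeι.trans (Scheme.IdealSheafData.coe_support_vanishingIdeal _)⟩

end ClosedSubsets

section RationalPoints

variable {k : Type u} [Field k] [IsAlgClosed k] {X Z : Scheme.{u}}

lemma isClosed_singleton_of_comp_eq_id (f : X ⟶ Spec (CommRingCat.of k))
    [LocallyOfFiniteType f] {x : Spec (CommRingCat.of k) ⟶ X} (hx : x ≫ f = 𝟙 _)
    (s : Spec (CommRingCat.of k)) : IsClosed {x s} := by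
  rw [Subsingleton.elim s (IsLocalRing.closedPoint k)]
  exact (pointEquivClosedPoint f ⟨x, hx⟩).2

lemma exists_comp_eq_of_mem_range (f : Z ⟶ X) [LocallyOfFiniteType f]
    (x : Spec (CommRingCat.of k) ⟶ X) {s : Spec (CommRingCat.of k)} (hx : x s ∈ Set.range f) :
    ∃ z : Spec (CommRingCat.of k) ⟶ Z, z ≫ f = x := by
  obtain ⟨z, hz⟩ := hx
  obtain ⟨t, -⟩ := Scheme.Pullback.exists_preimage_pullback z s hz
  have := LocallyOfFiniteType.jacobsonSpace (pullback.snd f x)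
  obtain ⟨c, -, hc⟩ := nonempty_inter_closedPoints (X := (pullback f x : Scheme.{u}))
    ⟨t, Set.mem_univ t⟩ isClosed_univ.isLocallyClosed
  have hc : IsClosed {c} := hc
  refine ⟨pointOfClosedPoint (pullback.snd f x) c hc ≫ pullback.fst f x, ?_⟩
  rw [Category.assoc, pullback.condition, ← Category.assoc, pointOfClosedPoint_comp,
    Category.id_comp]

end RationalPoints

namespace SchemeGroupAction

open Order

section Algebraic

variable {k : Type u} [Field k] [IsAlgClosed k] {G X Y : Scheme.{u}}
  {D : SchemeGroupAction (Spec (CommRingCat.of k)) G X} (hD : D.IsGroupAction)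
include hD

lemma topologicalKrullDim_le_coheight_e [LocallyOfFiniteType D.p]
    (s : Spec (CommRingCat.of k)) : topologicalKrullDim G ≤ coheight (D.e s) := by
  have := LocallyOfFiniteType.jacobsonSpace D.p
  refine topologicalKrullDim_le_of_forall_isClosed fun c hc => ?_
  have hg := pointOfClosedPoint_comp D.p c hc
  have := hD.isIso_leftTranslation _ hg
  rw [← pointOfClosedPoint_apply D.p c hc s, ← hD.e_leftTranslation _ hg, Scheme.Hom.comp_apply,
    coheight_eq_of_isOpenImmersion]

lemma nonempty_interior_range_incidenceToSpace [LocallyOfFiniteType D.p]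
    [LocallyOfFiniteType D.q] [IrreducibleSpace X] [IrreducibleSpace Y] (i : Y ⟶ X)
    [IsClosedImmersion i] (y : Spec (CommRingCat.of k) ⟶ Y) (hy : (y ≫ i) ≫ D.q = 𝟙 _)
    (hdim : topologicalKrullDim (D.orbitMap (y ≫ i) hy ⁻¹' Set.range i) + topologicalKrullDim X ≤
      topologicalKrullDim Y + topologicalKrullDim G) :
    (interior (Set.range (D.incidenceToSpace i))).Nonempty := by
  let s : Spec (CommRingCat.of k) := IsLocalRing.closedPoint k
  have := LocallyOfFiniteType.isLocallyNoetherian D.q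
  let z := D.groupToIncidence hD i y hy (D.e s)
  have hz : D.incidenceToSpace i z = (y ≫ i) s :=
    congr($(e_groupToIncidence_incidenceToSpace hD i y hy) s)
  have hys : IsClosed {y s} :=
    isClosed_singleton_of_comp_eq_id (i ≫ D.q) ((Category.assoc _ _ _).symm.trans hy) s
  refine nonempty_interior_range_of_coheight_le (D.incidenceToSpace i) hz ?_
  rw [← WithBot.coe_le_coe]
  calc ((coheight ((y ≫ i) s) + coheight (⟨z, hz⟩ : D.incidenceToSpace i ⁻¹' {(y ≫ i) s}) : ℕ∞) :
        WithBot ℕ∞)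
      ≤ topologicalKrullDim X +
          topologicalKrullDim (D.orbitMap (y ≫ i) hy ⁻¹' Set.range i) :=
        add_le_add (coheight_le_topologicalKrullDim _)
          (coheight_fibre_le_topologicalKrullDim (y ≫ i) hy i _)
    _ ≤ topologicalKrullDim Y + topologicalKrullDim G := (add_comm _ _).trans_le hdim
    _ ≤ coheight (y s) + coheight (D.e s) :=
        add_le_add (coheight_eq_topologicalKrullDim_of_isClosed (i ≫ D.q) hys).ge
          (topologicalKrullDim_le_coheight_e hD s)
    _ ≤ coheight z := by
        rw [add_comm]
        exact_mod_cast coheight_add_coheight_le_coheight_groupToIncidence hD i y hy s (D.e s)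

end Algebraic

section Orbits

variable {S G X Y : Scheme.{u}} {D : SchemeGroupAction S G X} (hD : D.IsGroupAction)
include hD

lemma exists_actElt_eq_of_comp_incidenceToSpace_eq (i : Y ⟶ X) {x : S ⟶ X} (hx : x ≫ D.q = 𝟙 S)
    (w : S ⟶ pullback D.act i) (hw : w ≫ D.incidenceToSpace i = x) :
    ∃ (g : S ⟶ G) (hg : g ≫ D.p = 𝟙 S) (y : S ⟶ Y) (hy : (y ≫ i) ≫ D.q = 𝟙 S),
      D.actElt g (y ≫ i) (by rw [hg, hy]) = x := by
  let g := w ≫ pullback.fst D.act i ≫ pullback.fst D.p D.q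
  have hg : g ≫ D.p = 𝟙 S := by
    rw [← hx, ← hw]
    simp only [g, incidenceToSpace, Category.assoc, pullback.condition]
  have hact : (w ≫ pullback.snd D.act i) ≫ i = D.actElt g x (hg.trans hx.symm) := by
    simp only [Category.assoc, ← pullback.condition]
    rw [← Category.assoc, comp_act]
    simp only [g, ← hw, incidenceToSpace, Category.assoc]
  refine ⟨g ≫ D.inv, by rw [Category.assoc, D.inv_over, hg], w ≫ pullback.snd D.act i,
    by rw [hact, D.actElt_over, hx], ?_⟩
  simp only [hact]
  exact hD.inv_act_act g x (hg.trans hx.symm)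

end Orbits

end SchemeGroupAction

theorem stmt_4_general (k : Type u) [Field k] [IsAlgClosed k] (G X : Scheme.{u})
    (D : SchemeGroupAction (Spec (CommRingCat.of k)) G X) (hD : D.IsGroupAction)
    [IrreducibleSpace X] [LocallyOfFiniteType D.p] [LocallyOfFiniteType D.q]
    (Y : Set X) (hYcl : IsClosed Y) (hYirr : IsIrreducible Y)
    (y : Spec (CommRingCat.of k) ⟶ X) (hy : y ≫ D.q = 𝟙 _) (hyY : ∀ s, y s ∈ Y)
    (hdim : topologicalKrullDim (D.orbitMap y hy ⁻¹' Y) + topologicalKrullDim X ≤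
      topologicalKrullDim Y + topologicalKrullDim G) :
    ∃ V : Set X, IsOpen V ∧ V.Nonempty ∧
      ∀ x : Spec (CommRingCat.of k) ⟶ X, x ≫ D.q = 𝟙 _ → (∀ s, x s ∈ V) →
        ∃ (g : Spec (CommRingCat.of k) ⟶ G) (hg : g ≫ D.p = 𝟙 _)
          (y : Spec (CommRingCat.of k) ⟶ X) (hy : y ≫ D.q = 𝟙 _),
          (∀ s, y s ∈ Y) ∧ D.actElt g y (by rw [hg, hy]) = x := by
  obtain ⟨Y', i, hi, rfl⟩ := exists_isClosedImmersion_range_eq hYcl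
  let s : Spec (CommRingCat.of k) := IsLocalRing.closedPoint k
  obtain ⟨y, rfl⟩ := exists_comp_eq_of_mem_range i y (hyY s)
  let homeo : Y' ≃ₜ Set.range i := i.isEmbedding.toHomeomorph
  have : IrreducibleSpace Y' :=
    have := Subtype.irreducibleSpace hYirr
    have : Nonempty Y' := ⟨y s⟩
    homeo.isOpenEmbedding.irreducibleSpace
  rw [← homeo.isHomeomorph.topologicalKrullDim_eq] at hdim
  refine ⟨_, isOpen_interior, D.nonempty_interior_range_incidenceToSpace hD i y hy hdim,
    fun x hx hxV => ?_⟩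
  obtain ⟨w, hw⟩ := exists_comp_eq_of_mem_range (D.incidenceToSpace i) x (interior_subset (hxV s))
  obtain ⟨g, hg, y, hy, hgy⟩ := D.exists_actElt_eq_of_comp_incidenceToSpace_eq hD i hx w hw
  exact ⟨g, hg, y ≫ i, hy, fun s => ⟨y s, (Scheme.Hom.comp_apply _ _ _).symm⟩, hgy⟩

/-- Let `G` be an algebraic group over an algebraically closed field `k`
acting on an irreducible `k`-variety `X` (schemes of finite type over `S = Spec k`; points
of varieties are identified with `k`-points, i.e. sections of the structure morphisms).
Let `Y ⊆ X` be an irreducible closed subvariety, and for a `k`-point `y` of `X` let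
`H(y) = {g ∈ G | g·y ∈ Y}` (the preimage of `Y` under `g ↦ g·y`).  Suppose there is a
nonempty relatively open `U ⊆ Y` such that for every `k`-point `y` of `U`,
`dim H(y) = dim Y + dim G − dim X` (stated additively as
`dim H(y) + dim X = dim Y + dim G` in `WithBot ℕ∞`).  Then there is a nonempty open
`V ⊆ X` such that every `k`-point of `V` lies in the `G`-orbit of a `k`-point of `Y`. -/
theorem stmt_4 (k : Type u) [Field k] [IsAlgClosed k]
    (G X : Scheme.{u}) (D : SchemeGroupAction (Spec (CommRingCat.of k)) G X)
    (hD : D.IsGroupAction)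
    [IrreducibleSpace X] [IsReduced X] [IsReduced G]
    (hGft : LocallyOfFiniteType D.p) (hXft : LocallyOfFiniteType D.q)
    (Y : Set X) (hYcl : IsClosed Y) (hYirr : IsIrreducible Y)
    (U : Set X) (hUY : U ⊆ Y) (hUne : U.Nonempty)
    (hUopen : ∃ O : Set X, IsOpen O ∧ U = Y ∩ O)
    (hdim : ∀ (y : Spec (CommRingCat.of k) ⟶ X) (hy : y ≫ D.q = 𝟙 _),
      (∀ s, y.base s ∈ U) →
      topologicalKrullDim
          ↥((D.actElt (𝟙 G) (D.p ≫ y)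
              (by rw [Category.id_comp, Category.assoc, hy, Category.comp_id])).base ⁻¹' Y)
          + topologicalKrullDim X
        = topologicalKrullDim ↥Y + topologicalKrullDim G) :
    ∃ V : Set X, IsOpen V ∧ V.Nonempty ∧
      ∀ (x : Spec (CommRingCat.of k) ⟶ X), x ≫ D.q = 𝟙 _ → (∀ s, x.base s ∈ V) →
        ∃ (g : Spec (CommRingCat.of k) ⟶ G) (hg : g ≫ D.p = 𝟙 _)
          (y : Spec (CommRingCat.of k) ⟶ X) (hy : y ≫ D.q = 𝟙 _),
          (∀ s, y.base s ∈ Y) ∧ D.actElt g y (by rw [hg, hy]) = x := by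
  obtain ⟨O, hO, rfl⟩ := hUopen
  have := LocallyOfFiniteType.jacobsonSpace D.q
  obtain ⟨c, hcU, hc⟩ := nonempty_inter_closedPoints hUne
    (hYcl.isLocallyClosed.inter hO.isLocallyClosed)
  let y := pointOfClosedPoint D.q c hc
  have hy : y ≫ D.q = 𝟙 _ := pointOfClosedPoint_comp D.q c hc
  have hyU (s) : y s ∈ Y ∩ O := (pointOfClosedPoint_apply D.q c hc s).symm ▸ hcU
  exact stmt_4_general k G X D hD Y hYcl hYirr y hy (fun s => hUY (hyU s)) (hdim y hy hyU).le
end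

section
/- For p prime and n ≥ 2, define for 1 ≤ i ≤ n−1 the vector η_i' = (1,...,1, b',...,b') ∈ Q^n where 1 appears i times and b' = −(p^n − p^{n−i})/(p^{n−i} − 1) appears n−i times, and let η_ω = −(p−1)(1,...,1). Then: (a) each η_i' lies on the hyperplane Σ_{j=1}^n p^{n−j} a_j = 0; (b) (η_1', ..., η_{n−1}', η_ω) is a Q-basis of Q^n; (c) the cone C = {(a_1,...,a_n) ∈ Z^n : a_1 ≥ a_2 ≥ ... ≥ a_n and Σ_{j=1}^n p^{n−j} a_j ≤ 0} equals the set of λ ∈ Z^n expressible as a nonnegative rational combination of η_1', ..., η_{n−1}', η_ω. -/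
/-!
The cone is cut out by `n` linear forms: the differences `a_i - a_{i+1}` and
`-∑ p ^ (n - j) a_j`. Each `η'_i` is constant except for a drop after its `i`-th coordinate and
lies on the hyperplane, while `η_ω` is constant and lies strictly below it. So the family is dual to
these forms up to positive factors, which makes it a basis in which the coordinates of a vector have
the signs of the values of the forms.
-/

lemma dual_apply_sum_smul_of_pairwise_eq_zero {ι R M : Type*} [Fintype ι] [CommSemiring R]
    [AddCommMonoid M] [Module R M] {v : ι → M} {φ : ι → Module.Dual R M}
    (hoff : Pairwise fun i j => φ i (v j) = 0) (c : ι → R) (i : ι) :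
    φ i (∑ j, c j • v j) = c i * φ i (v i) := by
  rw [map_sum, Finset.sum_eq_single i (fun j _ hj => by simp [hoff hj.symm]) (by simp), map_smul,
    smul_eq_mul]

section PairwiseDual

variable {ι K V : Type*} [Field K] [AddCommGroup V] [Module K V]
  {v : ι → V} {φ : ι → Module.Dual K V}

lemma linearIndependent_of_pairwise_dual_eq_zero (hoff : Pairwise fun i j => φ i (v j) = 0)
    (hdiag : ∀ i, φ i (v i) ≠ 0) : LinearIndependent K v :=
  .of_pairwise_dual_eq_zero_one v (fun i => (φ i (v i))⁻¹ • φ i)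
    (fun i j hij => by simp [hoff hij]) (fun i => by simp [hdiag i])

lemma forall_dual_nonneg_iff_exists_sum_smul [LinearOrder K] [IsStrictOrderedRing K] [Fintype ι]
    (hoff : Pairwise fun i j => φ i (v j) = 0) (hdiag : ∀ i, 0 < φ i (v i))
    (hspan : Submodule.span K (Set.range v) = ⊤) (x : V) :
    (∀ i, 0 ≤ φ i x) ↔ ∃ c : ι → K, (∀ i, 0 ≤ c i) ∧ x = ∑ i, c i • v i := by
  have hx : x ∈ Submodule.span K (Set.range v) := hspan ▸ Submodule.mem_top
  obtain ⟨c, rfl⟩ := (Submodule.mem_span_range_iff_exists_fun K).1 hx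
  have sign_eq (c : ι → K) (i : ι) : 0 ≤ φ i (∑ j, c j • v j) ↔ 0 ≤ c i := by
    rw [dual_apply_sum_smul_of_pairwise_eq_zero hoff, mul_nonneg_iff_of_pos_right (hdiag i)]
  refine ⟨fun h => ⟨c, fun i => (sign_eq c i).1 (h i), rfl⟩, ?_⟩
  rintro ⟨d, hd, hcd⟩ i
  rw [hcd, sign_eq]
  exact hd i

end PairwiseDual

lemma sub_one_mul_sum_Ico_pow {R : Type*} [CommRing R] (q : R) {i j n : ℕ} (hij : i ≤ j)
    (hjn : j ≤ n) :
    (q - 1) * ∑ k ∈ Finset.Ico i j, q ^ (n - 1 - k) = q ^ (n - i) - q ^ (n - j) := by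
  have telescope : ∀ k ∈ Finset.Ico i j,
      (q - 1) * q ^ (n - 1 - k) = -(q ^ (n - (k + 1)) - q ^ (n - k)) := by
    intro k hk
    have hk := (Finset.mem_Ico.1 hk).2
    rw [show n - k = n - 1 - k + 1 by omega, show n - (k + 1) = n - 1 - k by omega]
    ring
  rw [Finset.mul_sum, Finset.sum_congr rfl telescope, Finset.sum_neg_distrib,
    Finset.sum_Ico_sub (fun k => q ^ (n - k)) hij, neg_sub]

section StepVector

variable {R : Type*}

/-- The vector `(1, …, 1, b, …, b)` of length `n` with `i` leading ones: the common shape of all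
the generators. -/
def stepVector [One R] (n i : ℕ) (b : R) : Fin n → R :=
  fun k => if (k : ℕ) < i then 1 else b

lemma stepVector_sub_succ [Ring R] {n : ℕ} (b : R) (i : Fin n) (hi : (i : ℕ) + 1 < n)
    (j : ℕ) :
    stepVector n (j + 1) b i - stepVector n (j + 1) b ⟨i + 1, hi⟩ =
      if (i : ℕ) = j then 1 - b else 0 := by
  rcases lt_trichotomy (i : ℕ) j with h | h | h
  · simp [stepVector, h, h.ne, h.trans (Nat.lt_succ_self j)]
  · simp [stepVector, h]
  · simp [stepVector, h.ne', show ¬ (i : ℕ) < j + 1 by omega, show ¬ (i : ℕ) < j by omega]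

/-- The linear form `a ↦ ∑ q ^ (n - j) a_j` whose kernel is the hyperplane; with coordinates
numbered from `0` the exponents become `n - 1 - k`. -/
def hyperplaneForm [CommSemiring R] (q : R) (n : ℕ) : Module.Dual R (Fin n → R) :=
  dotProductEquiv R (Fin n) fun k => q ^ (n - 1 - (k : ℕ))

lemma hyperplaneForm_apply [CommSemiring R] (q : R) (n : ℕ) (x : Fin n → R) :
    hyperplaneForm q n x = ∑ k : Fin n, q ^ (n - 1 - (k : ℕ)) * x k :=
  rfl

lemma sub_one_mul_hyperplaneForm_stepVector [CommRing R] (q : R) {n i : ℕ} (hi : i ≤ n) (b : R) :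
    (q - 1) * hyperplaneForm q n (stepVector n i b) =
      q ^ n - q ^ (n - i) + b * (q ^ (n - i) - 1) := by
  have split : hyperplaneForm q n (stepVector n i b) =
      ∑ k ∈ Finset.Ico 0 i, q ^ (n - 1 - k) + b * ∑ k ∈ Finset.Ico i n, q ^ (n - 1 - k) := by
    simp only [hyperplaneForm_apply, stepVector]
    rw [Fin.sum_univ_eq_sum_range (fun k => q ^ (n - 1 - k) * if k < i then 1 else b) n,
      Finset.range_eq_Ico, ← Finset.sum_Ico_consecutive _ (Nat.zero_le i) hi, Finset.mul_sum]
    congr 1 <;> refine Finset.sum_congr rfl fun k hk => ?_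
    · rw [if_pos (Finset.mem_Ico.1 hk).2, mul_one]
    · rw [if_neg (Finset.mem_Ico.1 hk).1.not_gt, mul_comm]
  rw [split, mul_add, mul_left_comm, sub_one_mul_sum_Ico_pow q (Nat.zero_le i) hi,
    sub_one_mul_sum_Ico_pow q hi le_rfl, Nat.sub_zero, Nat.sub_self, pow_zero]

end StepVector

section FacetForm

variable {R : Type*} [CommRing R] {n : ℕ}

/-- The forms whose nonnegativity defines the cone `{a | a_1 ≥ … ≥ a_n, L a ≤ 0}`: the consecutive
differences, and `-L` at the last index. -/
def facetForm (L : Module.Dual R (Fin n → R)) (i : Fin n) : Module.Dual R (Fin n → R) :=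
  if h : (i : ℕ) + 1 < n then LinearMap.proj i - LinearMap.proj ⟨i + 1, h⟩ else -L

lemma facetForm_of_lt (L : Module.Dual R (Fin n → R)) {i : Fin n} (hi : (i : ℕ) + 1 < n)
    (x : Fin n → R) : facetForm L i x = x i - x ⟨i + 1, hi⟩ := by
  simp [facetForm, hi]

lemma facetForm_of_not_lt (L : Module.Dual R (Fin n → R)) {i : Fin n} (hi : ¬ (i : ℕ) + 1 < n)
    (x : Fin n → R) : facetForm L i x = -L x := by
  simp [facetForm, hi]

lemma forall_facetForm_nonneg_iff [PartialOrder R] [IsOrderedAddMonoid R]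
    (L : Module.Dual R (Fin n → R)) (x : Fin n → R) :
    (∀ i, 0 ≤ facetForm L i x) ↔ Antitone x ∧ L x ≤ 0 := by
  cases n with
  | zero =>
    have hLx : L x = 0 := by rw [Subsingleton.elim x 0, map_zero]
    exact ⟨fun _ => ⟨Subsingleton.antitone x, hLx.le⟩, fun _ i => i.elim0⟩
  | succ n =>
    have facet_castSucc (i : Fin n) :
        facetForm L i.castSucc x = x i.castSucc - x i.succ :=
      facetForm_of_lt L (Nat.succ_lt_succ i.isLt) x
    have facet_last : facetForm L (Fin.last n) x = -L x :=
      facetForm_of_not_lt L (lt_irrefl _) x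
    simp only [Fin.forall_fin_succ', facet_castSucc, facet_last, sub_nonneg, neg_nonneg,
      Fin.antitone_iff_succ_le]

end FacetForm

section EtaFamily

variable {K : Type*} [Field K]

/-- The entry `b'` of `η'_i`, chosen so that `η'_i` lies on the hyperplane. -/
def etaTail (q : K) (n i : ℕ) : K :=
  -((q ^ n - q ^ (n - i)) / (q ^ (n - i) - 1))

/-- The vector `η'_i`, meaningful for `i < n`: at `i = n` the denominator in `b'` vanishes. -/
def etaPrime (q : K) (n i : ℕ) : Fin n → K :=
  stepVector n i (etaTail q n i)

/-- The constant vector `η_ω`, the generator off the hyperplane. -/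
def etaOmega (q : K) (n : ℕ) : Fin n → K :=
  fun _ => -(q - 1)

/-- The generators of the cone, with `η'_{j+1}` at the index `j` for `j + 1 < n` and `η_ω` at the
last index. -/
def etaFamily (q : K) (n : ℕ) (j : Fin n) : Fin n → K :=
  if (j : ℕ) + 1 < n then etaPrime q n (j + 1) else etaOmega q n

lemma etaFamily_of_lt (q : K) {n : ℕ} {j : Fin n} (hj : (j : ℕ) + 1 < n) :
    etaFamily q n j = etaPrime q n (j + 1) :=
  if_pos hj

lemma etaFamily_of_not_lt (q : K) {n : ℕ} {j : Fin n} (hj : ¬ (j : ℕ) + 1 < n) :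
    etaFamily q n j = etaOmega q n :=
  if_neg hj

lemma etaOmega_eq_stepVector_zero (q : K) (n : ℕ) : etaOmega q n = stepVector n 0 (-(q - 1)) :=
  funext fun k => (if_neg (Nat.not_lt_zero k)).symm

lemma hyperplaneForm_etaOmega {q : K} (hq : q ≠ 1) (n : ℕ) :
    hyperplaneForm q n (etaOmega q n) = -(q ^ n - 1) := by
  apply mul_left_cancel₀ (sub_ne_zero.2 hq)
  rw [etaOmega_eq_stepVector_zero, sub_one_mul_hyperplaneForm_stepVector q (Nat.zero_le n),
    Nat.sub_zero]
  ring

variable [LinearOrder K] [IsStrictOrderedRing K] {q : K} {n : ℕ}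

lemma hyperplaneForm_etaPrime (hq : 1 < q) {i : ℕ} (hi : i < n) :
    hyperplaneForm q n (etaPrime q n i) = 0 := by
  have hpow : q ^ (n - i) - 1 ≠ 0 := (sub_pos.2 (one_lt_pow₀ hq (by omega))).ne'
  apply mul_left_cancel₀ (sub_pos.2 hq).ne'
  rw [etaPrime, sub_one_mul_hyperplaneForm_stepVector q hi.le, etaTail, neg_mul,
    div_mul_cancel₀ _ hpow, add_neg_cancel, mul_zero]

lemma etaTail_nonpos (hq : 1 ≤ q) (n i : ℕ) : etaTail q n i ≤ 0 :=
  neg_nonpos.2 <| div_nonneg (sub_nonneg.2 (pow_le_pow_right₀ hq (Nat.sub_le n i)))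
    (sub_nonneg.2 (one_le_pow₀ hq))

lemma pairwise_facetForm_etaFamily_eq_zero (hq : 1 < q) :
    Pairwise fun i j => facetForm (hyperplaneForm q n) i (etaFamily q n j) = 0 := by
  intro i j hij
  have hne : (i : ℕ) ≠ j := Fin.val_ne_of_ne hij
  by_cases hi : (i : ℕ) + 1 < n <;> by_cases hj : (j : ℕ) + 1 < n
  · rw [facetForm_of_lt _ hi, etaFamily_of_lt q hj, etaPrime, stepVector_sub_succ, if_neg hne]
  · rw [facetForm_of_lt _ hi, etaFamily_of_not_lt q hj]
    exact sub_self _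
  · rw [facetForm_of_not_lt _ hi, etaFamily_of_lt q hj, hyperplaneForm_etaPrime hq hj, neg_zero]
  · omega

lemma facetForm_etaFamily_self_pos (hq : 1 < q) (i : Fin n) :
    0 < facetForm (hyperplaneForm q n) i (etaFamily q n i) := by
  by_cases hi : (i : ℕ) + 1 < n
  · rw [facetForm_of_lt _ hi, etaFamily_of_lt q hi, etaPrime, stepVector_sub_succ, if_pos rfl]
    linarith [etaTail_nonpos hq.le n (i + 1)]
  · rw [facetForm_of_not_lt _ hi, etaFamily_of_not_lt q hi, hyperplaneForm_etaOmega hq.ne', neg_neg]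
    exact sub_pos.2 (one_lt_pow₀ hq (by omega))

theorem stmt_10_general (hq : 1 < q) (n : ℕ) :
    (∀ i < n, hyperplaneForm q n (etaPrime q n i) = 0) ∧
    (LinearIndependent K (etaFamily q n) ∧ Submodule.span K (Set.range (etaFamily q n)) = ⊤) ∧
    (∀ x : Fin n → K, (Antitone x ∧ hyperplaneForm q n x ≤ 0) ↔
      ∃ c : Fin n → K, (∀ j, 0 ≤ c j) ∧ x = ∑ j, c j • etaFamily q n j) := by
  have hoff := pairwise_facetForm_etaFamily_eq_zero (n := n) hq
  have hdiag := facetForm_etaFamily_self_pos (n := n) hq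
  have hli := linearIndependent_of_pairwise_dual_eq_zero hoff fun i => (hdiag i).ne'
  have hspan := hli.span_eq_top_of_card_eq_finrank' (by simp)
  refine ⟨fun i hi => hyperplaneForm_etaPrime hq hi, ⟨hli, hspan⟩, fun x => ?_⟩
  rw [← forall_facetForm_nonneg_iff, forall_dual_nonneg_iff_exists_sum_smul hoff hdiag hspan]

end EtaFamily

/-- For `p` prime, `n ≥ 2`: (a) the vectors
`η'_i = (1,…,1, b',…,b')` (with `i` ones and `b' = −(pⁿ − p^{n−i})/(p^{n−i} − 1)`) lie on the
hyperplane `∑_j p^{n−j} a_j = 0`; (b) `(η'_1, …, η'_{n−1}, η_ω)` with `η_ω = −(p−1,…,p−1)` is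
a `ℚ`-basis of `ℚⁿ`; (c) the highest-weight cone
`C = {a ∈ ℤⁿ | a₁ ≥ … ≥ a_n, ∑_j p^{n−j} a_j ≤ 0}` is exactly the set of integer vectors
expressible as a nonnegative rational combination of `η'_1, …, η'_{n−1}, η_ω`.
(Indexing is 0-based: the coordinate `k : Fin n` stands for `a_{k+1}`, so the hyperplane
coefficient of coordinate `k` is `p^{n−1−k}`.) -/
theorem stmt_10 (p n : ℕ) [Fact p.Prime] (hn : 2 ≤ n) :
    let η' : ℕ → Fin n → ℚ := fun i k =>
      if (k : ℕ) < i then 1 else -(((p : ℚ) ^ n - (p : ℚ) ^ (n - i)) / ((p : ℚ) ^ (n - i) - 1))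
    let ηω : Fin n → ℚ := fun _ => -((p : ℚ) - 1)
    let fam : Fin n → (Fin n → ℚ) := fun j => if (j : ℕ) + 1 < n then η' ((j : ℕ) + 1) else ηω
    (∀ i : ℕ, 1 ≤ i → i ≤ n - 1 →
        ∑ k : Fin n, (p : ℚ) ^ (n - 1 - (k : ℕ)) * η' i k = 0) ∧
    (LinearIndependent ℚ fam ∧ Submodule.span ℚ (Set.range fam) = ⊤) ∧
    (∀ a : Fin n → ℤ,
      ((∀ j k : Fin n, j ≤ k → a k ≤ a j) ∧
          ∑ k : Fin n, (p : ℤ) ^ (n - 1 - (k : ℕ)) * a k ≤ 0)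
        ↔ ∃ c : Fin n → ℚ, (∀ j, 0 ≤ c j) ∧
            (fun k => ((a k : ℚ))) = ∑ j : Fin n, c j • fam j) := by
  obtain ⟨hyperplane, basis, cone⟩ :=
    stmt_10_general (q := (p : ℚ)) (by exact_mod_cast (Fact.out : p.Prime).one_lt) n
  refine ⟨fun i _ hi => hyperplane i (by omega), basis, fun a => .trans ?_ (cone fun k => a k)⟩
  simp only [hyperplaneForm_apply, Antitone]
  norm_cast
end
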